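/- There exists a constant C > 0 such that for every T with 0 ≤ T ≤ 1 and every admissible source g on [0,T]×ℝ², the Duhamel term D(t) = ∫₀^t U(t−τ) g(τ) dτ satisfies both (∫₀^T ‖D(t)‖_{L^∞(ℝ²)}^{9/4} dt)^{4/9} ≤ C ∫₀^T ‖g(τ)‖_{L²(ℝ²)} dτ and (∫₀^T ‖D(t)‖_{L^∞(ℝ²)}^{9/4} dt)^{4/9} ≤ C ∫₀^T ‖D_{x₁}^{-2/9} g(τ)‖_{L²(ℝ²)} dτ. -/

import Mathlib

/-!
The proof rests on one dispersive bound, with a weight `w(ξ₁)² = max 1 |ξ₁|^{1/2}` (`wsq`) that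
serves both right-hand sides: `w ≥ 1` and `w ≥ |ξ₁|^{2/9}`, so by Plancherel each of `‖g‖_{L²}` and
`‖D_{x₁}^{-2/9} g‖_{L²}` dominates `‖w⁻¹ F g‖_{L²}` (`wNorm_le_L2`, `wNorm_le_Dx1`).

**Dispersion.** The kernel `∫ w(ξ₁)² exp (i (2π y·ξ + t ξ₁ (ξ₁² + ξ₂²))) dξ`, truncated in `ξ₁` and
regularized in `ξ₂`, is `O(|t|^{-5/6})` for `|t| ≤ 1`, uniformly in `y` and in the truncation
(`Ker_bound`). The `ξ₂`-integral is Gaussian and produces `|t ξ₁|^{-1/2}`, a damping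
`exp (-α / |ξ₁|)` and an extra phase `-β / ξ₁` with `t β ≥ 0` (`inner_gaussian`). For `|ξ₁| ≥ 1` the
weight cancels `|ξ₁|^{-1/2}`; the remaining phase has third derivative of size at least `6 |t|`, as
`t ξ₁³` and `-β / ξ₁` have third derivatives of the same sign, and van der Corput's third-derivative
test (`vdc_three`, `osc_bound`) gives `|t|^{-1/3}`. The range `|ξ₁| ≤ 1` is trivially integrable.

**Dual Strichartz estimate.** For a measurable curve `x(t)` and `ψ ∈ L^{9/5}(0,1)`, expanding the
square (`TT*`) bounds `‖w ∫ ψ(t) exp (i ph(x(t), t, ·)) dt‖²_{L²}` by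
`∬ |ψ(t)| |ψ(s)| |t - s|^{-5/6} dt ds`, and `|t|^{-5/6} ∈ L^{9/8}(-1,1)`, so Young's inequality
bounds this by `‖ψ‖²_{L^{9/5}}` (`young_decay`, `dual_full`, `strichartz`).

**Retarded estimate.** The supremum in space is linearized by a measurable choice of points `x(t)`
where `|D(t)|` is at least half its supremum (`exists_near_max`). Pairing `D(t, x(t))` with a test
function `ψ ∈ L^{9/5}`, dual to `L^{9/4}`, and exchanging the integrals in `t` and `τ` leaves the
cutoff `τ ≤ t` on `ψ`, where it is harmless (`retarded_along`). As the right-hand side is `L¹` in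
`τ`, no Christ–Kiselev argument is needed.
-/

open MeasureTheory
open scoped ENNReal NNReal

noncomputable section

/-- Fourier transform on ℝ² (realized as ℝ × ℝ). -/
def FT (f : ℝ × ℝ → ℂ) : ℝ × ℝ → ℂ := fun ξ =>
  ∫ x : ℝ × ℝ,
    Complex.exp (((-(2 * Real.pi * (x.1 * ξ.1 + x.2 * ξ.2)) : ℝ) : ℂ) * Complex.I) * f x

/-- Inverse Fourier transform on ℝ². -/
def FTinv (f : ℝ × ℝ → ℂ) : ℝ × ℝ → ℂ := fun x =>
  ∫ ξ : ℝ × ℝ,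
    Complex.exp ((((2 * Real.pi * (x.1 * ξ.1 + x.2 * ξ.2)) : ℝ) : ℂ) * Complex.I) * f ξ

/-- The linear Zakharov–Kuznetsov group `U(t)φ = F⁻¹(e^{i t ξ₁(ξ₁²+ξ₂²)} Fφ)`. -/
def U (t : ℝ) (φ : ℝ × ℝ → ℂ) : ℝ × ℝ → ℂ :=
  FTinv (fun ξ => Complex.exp (Complex.I * ((t * ξ.1 * (ξ.1 ^ 2 + ξ.2 ^ 2) : ℝ) : ℂ)) * FT φ ξ)

/-- Fractional derivative in the first variable: `D^r_{x₁} f = F⁻¹(|ξ₁|^r F f)`. -/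
def Dx1 (r : ℝ) (f : ℝ × ℝ → ℂ) : ℝ × ℝ → ℂ :=
  FTinv (fun ξ => ((|ξ.1| ^ r : ℝ) : ℂ) * FT f ξ)

/-- Fractional derivative in the second variable: `D^r_{x₂} f = F⁻¹(|ξ₂|^r F f)`. -/
def Dx2 (r : ℝ) (f : ℝ × ℝ → ℂ) : ℝ × ℝ → ℂ :=
  FTinv (fun ξ => ((|ξ.2| ^ r : ℝ) : ℂ) * FT f ξ)

/-- Partial derivative ∂_{x₁}. -/
def pd1 (f : ℝ × ℝ → ℂ) : ℝ × ℝ → ℂ := fun x => fderiv ℝ f x (1, 0)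

/-- Partial derivative ∂_{x₂}. -/
def pd2 (f : ℝ × ℝ → ℂ) : ℝ × ℝ → ℂ := fun x => fderiv ℝ f x (0, 1)

/-- Duhamel integral `∫₀^t U(t-τ) g(τ) dτ`. -/
def Duh (g : ℝ → ℝ × ℝ → ℂ) (t : ℝ) : ℝ × ℝ → ℂ := fun x =>
  ∫ τ in (0:ℝ)..t, U (t - τ) (g τ) x

/-- Sobolev norm `‖f‖_{H^s(ℝ²)}`. -/
def HsNorm (s : ℝ) (f : ℝ × ℝ → ℂ) : ℝ≥0∞ :=
  (∫⁻ ξ : ℝ × ℝ,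
      ENNReal.ofReal ((1 + ξ.1 ^ 2 + ξ.2 ^ 2) ^ s) * (‖FT f ξ‖₊ : ℝ≥0∞) ^ (2 : ℝ)) ^ ((1:ℝ)/2)

/-- The mixed norm `‖f‖_{L^{9/4}_T L^∞_x}`. -/
def L94LinfNorm (T : ℝ) (f : ℝ → ℝ × ℝ → ℂ) : ℝ≥0∞ :=
  (∫⁻ t in Set.Icc (0:ℝ) T, (eLpNorm (f t) ⊤ volume) ^ ((9:ℝ)/4)) ^ ((4:ℝ)/9)

/-- The mixed norm `‖f‖_{L²_{x₁} L^∞_{x₂ T}}` (with genuine suprema). -/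
def L2x1LinfNorm (T : ℝ) (f : ℝ → ℝ × ℝ → ℂ) : ℝ≥0∞ :=
  (∫⁻ x₁ : ℝ,
      (⨆ x₂ : ℝ, ⨆ t ∈ Set.Icc (0:ℝ) T, (‖f t (x₁, x₂)‖₊ : ℝ≥0∞)) ^ (2 : ℝ)) ^ ((1:ℝ)/2)

/-- The mixed norm `‖f‖_{L^∞_{x₁} L²_{x₂ T}}`. -/
def LinfX1L2Norm (T : ℝ) (f : ℝ → ℝ × ℝ → ℂ) : ℝ≥0∞ :=
  ⨆ x₁ : ℝ,
    (∫⁻ x₂ : ℝ, ∫⁻ t in Set.Icc (0:ℝ) T, (‖f t (x₁, x₂)‖₊ : ℝ≥0∞) ^ (2 : ℝ)) ^ ((1:ℝ)/2)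

/-- The mixed norm `‖g‖_{L¹_{x₁} L²_{x₂ T}}`. -/
def L1x1L2Norm (T : ℝ) (g : ℝ → ℝ × ℝ → ℂ) : ℝ≥0∞ :=
  ∫⁻ x₁ : ℝ,
    (∫⁻ x₂ : ℝ, ∫⁻ τ in Set.Icc (0:ℝ) T, (‖g τ (x₁, x₂)‖₊ : ℝ≥0∞) ^ (2 : ℝ)) ^ ((1:ℝ)/2)

/-! ### Van der Corput estimates -/

lemma vdc_hasDeriv_exp {θ θ₁ : ℝ → ℝ} {x : ℝ} (h : HasDerivAt θ (θ₁ x) x) :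
    HasDerivAt (fun y => Complex.exp (Complex.I * (θ y : ℂ)))
      (Complex.exp (Complex.I * (θ x : ℂ)) * (Complex.I * (θ₁ x : ℂ))) x :=
  ((h.ofReal_comp).const_mul Complex.I).cexp

lemma norm_exp_I_mul (r : ℝ) : ‖Complex.exp (Complex.I * (r : ℂ))‖ = 1 := by
  rw [mul_comm]; exact Complex.norm_exp_ofReal_mul_I r

lemma vdc_trivial (θ : ℝ → ℝ) {a b : ℝ} (hab : a ≤ b) :
    ‖∫ x in a..b, Complex.exp (Complex.I * (θ x : ℂ))‖ ≤ b - a := by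
  have := intervalIntegral.norm_integral_le_of_norm_le_const (a := a) (b := b) (C := 1)
    (f := fun x => Complex.exp (Complex.I * (θ x : ℂ))) (fun x _ => (norm_exp_I_mul _).le)
  simpa [abs_of_nonneg (sub_nonneg.2 hab)] using this

/-- First-derivative test: integrate by parts against `1 / θ'`, which is monotone as `θ'' ≥ 0`. -/
lemma vdc_one {θ θ₁ θ₂ : ℝ → ℝ} {a b μ : ℝ} (hab : a ≤ b) (hμ : 0 < μ)
    (h1 : ∀ x ∈ Set.Icc a b, HasDerivAt θ (θ₁ x) x)
    (h2 : ∀ x ∈ Set.Icc a b, HasDerivAt θ₁ (θ₂ x) x)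
    (hc : ContinuousOn θ₂ (Set.Icc a b))
    (hconv : ∀ x ∈ Set.Icc a b, 0 ≤ θ₂ x) (hge : ∀ x ∈ Set.Icc a b, μ ≤ θ₁ x) :
    ‖∫ x in a..b, Complex.exp (Complex.I * (θ x : ℂ))‖ ≤ 2 / μ := by
  have hpos : ∀ x ∈ Set.Icc a b, 0 < θ₁ x := fun x hx => hμ.trans_le (hge x hx)
  have hu : Set.uIcc a b = Set.Icc a b := Set.uIcc_of_le hab
  have hθ1c : ContinuousOn θ₁ (Set.Icc a b) := fun x hx =>
    (h2 x hx).continuousAt.continuousWithinAt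
  have hθc : ContinuousOn θ (Set.Icc a b) := fun x hx =>
    (h1 x hx).continuousAt.continuousWithinAt
  -- `r = 1 / θ'`, whose derivative is `-θ'' / θ' ^ 2`
  have hr : ∀ x ∈ Set.Icc a b, HasDerivAt (fun y => (θ₁ y)⁻¹) (-θ₂ x / θ₁ x ^ 2) x :=
    fun x hx => (h2 x hx).inv (hpos x hx).ne'
  have hrc : ContinuousOn (fun x => -θ₂ x / θ₁ x ^ 2) (Set.Icc a b) :=
    hc.neg.div (hθ1c.pow 2) (fun x hx => (pow_pos (hpos x hx) 2).ne')
  have hec : ContinuousOn (fun x => Complex.exp (Complex.I * (θ x : ℂ))) (Set.Icc a b) := by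
    have : ContinuousOn (fun x => (θ x : ℂ)) (Set.Icc a b) :=
      Complex.continuous_ofReal.comp_continuousOn hθc
    exact Complex.continuous_exp.comp_continuousOn (continuousOn_const.mul this)
  have ibp := intervalIntegral.integral_mul_deriv_eq_deriv_mul
    (a := a) (b := b)
    (u := fun x => ((θ₁ x)⁻¹ : ℝ) * (-Complex.I))
    (u' := fun x => ((-θ₂ x / θ₁ x ^ 2 : ℝ) : ℂ) * (-Complex.I))
    (v := fun x => Complex.exp (Complex.I * (θ x : ℂ)))
    (v' := fun x => Complex.exp (Complex.I * (θ x : ℂ)) * (Complex.I * (θ₁ x : ℂ)))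
    (fun x hx => ((hr x (hu ▸ hx)).ofReal_comp).mul_const _)
    (fun x hx => vdc_hasDeriv_exp (h1 x (hu ▸ hx)))
    (by
      apply ContinuousOn.intervalIntegrable
      rw [hu]
      exact (Complex.continuous_ofReal.comp_continuousOn hrc).mul continuousOn_const)
    (by
      apply ContinuousOn.intervalIntegrable
      rw [hu]
      exact hec.mul (continuousOn_const.mul (Complex.continuous_ofReal.comp_continuousOn hθ1c)))
  have hL : ∫ x in a..b, Complex.exp (Complex.I * (θ x : ℂ)) =
      ∫ x in a..b, (((θ₁ x)⁻¹ : ℝ) * (-Complex.I)) *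
        (Complex.exp (Complex.I * (θ x : ℂ)) * (Complex.I * (θ₁ x : ℂ))) := by
    apply intervalIntegral.integral_congr
    intro x hx
    rw [hu] at hx
    have h0 : (θ₁ x : ℂ) ≠ 0 := by exact_mod_cast (hpos x hx).ne'
    simp only
    push_cast
    field_simp
    simp
  have hInt : ‖∫ x in a..b, ((-θ₂ x / θ₁ x ^ 2 : ℝ) : ℂ) * (-Complex.I) *
      Complex.exp (Complex.I * (θ x : ℂ))‖ ≤ (θ₁ a)⁻¹ - (θ₁ b)⁻¹ := by
    have e1 : ∫ x in a..b, (-(-θ₂ x / θ₁ x ^ 2)) = (θ₁ a)⁻¹ - (θ₁ b)⁻¹ := by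
      rw [intervalIntegral.integral_neg, intervalIntegral.integral_eq_sub_of_hasDerivAt
        (f := fun y => (θ₁ y)⁻¹) (fun x hx => hr x (hu ▸ hx))]
      · ring
      · apply ContinuousOn.intervalIntegrable
        rwa [hu]
    rw [← e1]
    apply intervalIntegral.norm_integral_le_of_norm_le hab
    · filter_upwards with x hx
      have hx' := Set.Ioc_subset_Icc_self hx
      rw [norm_mul, norm_mul, norm_exp_I_mul, Complex.norm_real, norm_neg, Complex.norm_I,
        mul_one, mul_one, Real.norm_eq_abs, neg_div, abs_neg, neg_neg, abs_of_nonneg]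
      exact div_nonneg (hconv x hx') (sq_nonneg _)
    · apply ContinuousOn.intervalIntegrable
      rw [hu]; exact hrc.neg
  have ha := hpos a ⟨le_rfl, hab⟩
  have hb := hpos b ⟨hab, le_rfl⟩
  rw [hL, ibp]
  refine (norm_sub_le _ _).trans ?_
  refine (add_le_add (norm_sub_le _ _) hInt).trans ?_
  simp only [norm_mul, norm_exp_I_mul, Complex.norm_real, norm_neg, Complex.norm_I, mul_one,
    Real.norm_eq_abs, abs_inv, abs_of_pos ha, abs_of_pos hb]
  have : (θ₁ a)⁻¹ ≤ μ⁻¹ := inv_anti₀ hμ (hge a ⟨le_rfl, hab⟩)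
  rw [div_eq_mul_inv]
  linarith

/-- The second-derivative test when the phase is non-decreasing: outside an interval of length `δ`
at the left end, the first derivative is at least `lam * δ`. -/
lemma vdc_two_aux {θ θ₁ θ₂ : ℝ → ℝ} {a b lam δ : ℝ} (hab : a ≤ b) (hl : 0 < lam) (hδ : 0 < δ)
    (h1 : ∀ x ∈ Set.Icc a b, HasDerivAt θ (θ₁ x) x)
    (h2 : ∀ x ∈ Set.Icc a b, HasDerivAt θ₁ (θ₂ x) x)
    (hc : ContinuousOn θ₂ (Set.Icc a b))
    (hge : ∀ x ∈ Set.Icc a b, lam ≤ θ₂ x) (h0 : 0 ≤ θ₁ a) :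
    ‖∫ x in a..b, Complex.exp (Complex.I * (θ x : ℂ))‖ ≤ δ + 2 / (lam * δ) := by
  have hpos : 0 < 2 / (lam * δ) := by positivity
  by_cases hd : b ≤ a + δ
  · have := vdc_trivial θ hab
    linarith
  push Not at hd
  have hsub : Set.Icc (a + δ) b ⊆ Set.Icc a b := Set.Icc_subset_Icc_left (by linarith)
  have hθc : ContinuousOn θ (Set.Icc a b) := fun x hx =>
    (h1 x hx).continuousAt.continuousWithinAt
  have hec : ContinuousOn (fun x => Complex.exp (Complex.I * (θ x : ℂ))) (Set.Icc a b) := by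
    have : ContinuousOn (fun x => (θ x : ℂ)) (Set.Icc a b) :=
      Complex.continuous_ofReal.comp_continuousOn hθc
    exact Complex.continuous_exp.comp_continuousOn (continuousOn_const.mul this)
  have hsplit := intervalIntegral.integral_add_adjacent_intervals (μ := volume)
    (a := a) (b := a + δ) (c := b) (f := fun x => Complex.exp (Complex.I * (θ x : ℂ)))
    (by
      apply ContinuousOn.intervalIntegrable
      rw [Set.uIcc_of_le (by linarith)]
      exact hec.mono (Set.Icc_subset_Icc_right hd.le))
    (by
      apply ContinuousOn.intervalIntegrable
      rw [Set.uIcc_of_le hd.le]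
      exact hec.mono hsub)
  rw [← hsplit]
  refine (norm_add_le _ _).trans (add_le_add ?_ ?_)
  · have := vdc_trivial θ (a := a) (b := a + δ) (by linarith)
    linarith
  · refine vdc_one (θ₁ := θ₁) (θ₂ := θ₂) hd.le (by positivity) (fun x hx => h1 x (hsub hx))
      (fun x hx => h2 x (hsub hx)) (hc.mono hsub) (fun x hx => hl.le.trans (hge x (hsub hx))) ?_
    intro x hx
    have hx' := hsub hx
    have hm := (convex_Icc a b).mul_sub_le_image_sub_of_le_deriv (f := θ₁) (C := lam)
      (fun y hy => (h2 y hy).continuousAt.continuousWithinAt)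
      (fun y hy => (h2 y (interior_subset hy)).differentiableAt.differentiableWithinAt)
      (fun y hy => by rw [(h2 y (interior_subset hy)).deriv]; exact hge y (interior_subset hy))
      a ⟨le_rfl, hab⟩ x hx' hx'.1
    have : lam * δ ≤ lam * (x - a) := by
      apply mul_le_mul_of_nonneg_left _ hl.le
      linarith [hx.1]
    linarith

lemma vdc_reflect (θ : ℝ → ℝ) (a b : ℝ) :
    ∫ x in (-b)..(-a), Complex.exp (Complex.I * (θ (-x) : ℂ)) =
      ∫ x in a..b, Complex.exp (Complex.I * (θ x : ℂ)) := by
  rw [intervalIntegral.integral_comp_neg (fun x => Complex.exp (Complex.I * (θ x : ℂ)))]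
  simp

lemma vdc_conj (θ : ℝ → ℝ) (a b : ℝ) :
    ‖∫ x in a..b, Complex.exp (Complex.I * ((-θ x : ℝ) : ℂ))‖ =
      ‖∫ x in a..b, Complex.exp (Complex.I * (θ x : ℂ))‖ := by
  rw [← Complex.norm_conj (∫ x in a..b, Complex.exp (Complex.I * (θ x : ℂ))),
    intervalIntegral.intervalIntegral_eq_integral_uIoc,
    intervalIntegral.intervalIntegral_eq_integral_uIoc]
  simp only [Complex.real_smul, map_mul, norm_mul, Complex.norm_conj]
  congr 1
  rw [← Complex.norm_conj (∫ x in Set.uIoc a b, Complex.exp (Complex.I * (θ x : ℂ))),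
    ← integral_conj]
  congr 2
  ext x
  rw [← Complex.exp_conj]
  simp

lemma hasDerivAt_reflect {f : ℝ → ℝ} {f' x : ℝ} (h : HasDerivAt f f' (-x)) :
    HasDerivAt (fun y => f (-y)) (-f') x := by
  simpa [Function.comp_def] using h.comp x (hasDerivAt_neg x)

/-- Second-derivative test, for every splitting length `δ`: the interval is cut at a zero of `θ'`, and
`vdc_two_aux` applies on either side after a reflection. -/
lemma vdc_two {θ θ₁ θ₂ : ℝ → ℝ} {a b lam δ : ℝ} (hab : a ≤ b) (hl : 0 < lam) (hδ : 0 < δ)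
    (h1 : ∀ x ∈ Set.Icc a b, HasDerivAt θ (θ₁ x) x)
    (h2 : ∀ x ∈ Set.Icc a b, HasDerivAt θ₁ (θ₂ x) x)
    (hc : ContinuousOn θ₂ (Set.Icc a b))
    (hge : ∀ x ∈ Set.Icc a b, lam ≤ θ₂ x) :
    ‖∫ x in a..b, Complex.exp (Complex.I * (θ x : ℂ))‖ ≤ 2 * (δ + 2 / (lam * δ)) := by
  have hpos : 0 < δ + 2 / (lam * δ) := by positivity
  -- the half on which `θ' ≤ 0` is reflected to one on which `θ' ≥ 0`
  have refl : ∀ c, a ≤ c → c ≤ b → θ₁ c ≤ 0 →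
      ‖∫ x in a..c, Complex.exp (Complex.I * (θ x : ℂ))‖ ≤ δ + 2 / (lam * δ) := by
    intro c hac hcb hcneg
    have hm : ∀ x ∈ Set.Icc (-c) (-a), -x ∈ Set.Icc a b := fun x hx =>
      ⟨by linarith [hx.2], by linarith [hx.1]⟩
    rw [← vdc_reflect]
    refine vdc_two_aux (θ := fun x => θ (-x)) (θ₁ := fun x => -θ₁ (-x)) (θ₂ := fun x => θ₂ (-x))
      (by linarith) hl hδ ?_ ?_ ?_ ?_ ?_
    · intro x hx
      exact hasDerivAt_reflect (h1 (-x) (hm x hx))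
    · intro x hx
      simpa [Pi.neg_def] using (hasDerivAt_reflect (h2 (-x) (hm x hx))).neg
    · exact hc.comp continuous_neg.continuousOn hm
    · exact fun x hx => hge _ (hm x hx)
    · simpa using hcneg
  by_cases ha : 0 ≤ θ₁ a
  · have := vdc_two_aux hab hl hδ h1 h2 hc hge ha
    linarith
  by_cases hb : θ₁ b ≤ 0
  · have := refl b hab le_rfl hb
    linarith
  push Not at ha hb
  obtain ⟨c, hc', hc0⟩ := intermediate_value_Icc hab
    (fun x hx => (h2 x hx).continuousAt.continuousWithinAt : ContinuousOn θ₁ (Set.Icc a b))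
    ⟨ha.le, hb.le⟩
  have hec : ContinuousOn (fun x => Complex.exp (Complex.I * (θ x : ℂ))) (Set.Icc a b) := by
    have : ContinuousOn (fun x => (θ x : ℂ)) (Set.Icc a b) :=
      Complex.continuous_ofReal.comp_continuousOn
        (fun x hx => (h1 x hx).continuousAt.continuousWithinAt)
    exact Complex.continuous_exp.comp_continuousOn (continuousOn_const.mul this)
  have hsub : Set.Icc c b ⊆ Set.Icc a b := Set.Icc_subset_Icc_left hc'.1
  rw [← intervalIntegral.integral_add_adjacent_intervals (μ := volume) (b := c)
    (by
      apply ContinuousOn.intervalIntegrable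
      rw [Set.uIcc_of_le hc'.1]
      exact hec.mono (Set.Icc_subset_Icc_right hc'.2))
    (by
      apply ContinuousOn.intervalIntegrable
      rw [Set.uIcc_of_le hc'.2]
      exact hec.mono hsub)]
  refine (norm_add_le _ _).trans ?_
  rw [two_mul]
  refine add_le_add (refl c hc'.1 hc'.2 hc0.le) ?_
  exact vdc_two_aux hc'.2 hl hδ (fun x hx => h1 x (hsub hx)) (fun x hx => h2 x (hsub hx))
    (hc.mono hsub) (fun x hx => hge x (hsub hx)) hc0.ge

/-- The third-derivative test when the phase is convex. -/
lemma vdc_three_aux {θ θ₁ θ₂ θ₃ : ℝ → ℝ} {a b lam δ : ℝ} (hab : a ≤ b) (hl : 0 < lam)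
    (hδ : 0 < δ)
    (h1 : ∀ x ∈ Set.Icc a b, HasDerivAt θ (θ₁ x) x)
    (h2 : ∀ x ∈ Set.Icc a b, HasDerivAt θ₁ (θ₂ x) x)
    (h3 : ∀ x ∈ Set.Icc a b, HasDerivAt θ₂ (θ₃ x) x)
    (hge : ∀ x ∈ Set.Icc a b, lam ≤ θ₃ x) (h0 : 0 ≤ θ₂ a) :
    ‖∫ x in a..b, Complex.exp (Complex.I * (θ x : ℂ))‖ ≤
      δ + 2 * (δ + 2 / (lam * δ * δ)) := by
  have hpos : 0 < 2 / (lam * δ * δ) := by positivity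
  by_cases hd : b ≤ a + δ
  · have := vdc_trivial θ hab
    linarith
  push Not at hd
  have hsub : Set.Icc (a + δ) b ⊆ Set.Icc a b := Set.Icc_subset_Icc_left (by linarith)
  have hθc : ContinuousOn θ (Set.Icc a b) := fun x hx =>
    (h1 x hx).continuousAt.continuousWithinAt
  have hec : ContinuousOn (fun x => Complex.exp (Complex.I * (θ x : ℂ))) (Set.Icc a b) := by
    have : ContinuousOn (fun x => (θ x : ℂ)) (Set.Icc a b) :=
      Complex.continuous_ofReal.comp_continuousOn hθc
    exact Complex.continuous_exp.comp_continuousOn (continuousOn_const.mul this)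
  have hsplit := intervalIntegral.integral_add_adjacent_intervals (μ := volume)
    (a := a) (b := a + δ) (c := b) (f := fun x => Complex.exp (Complex.I * (θ x : ℂ)))
    (by
      apply ContinuousOn.intervalIntegrable
      rw [Set.uIcc_of_le (by linarith)]
      exact hec.mono (Set.Icc_subset_Icc_right hd.le))
    (by
      apply ContinuousOn.intervalIntegrable
      rw [Set.uIcc_of_le hd.le]
      exact hec.mono hsub)
  rw [← hsplit]
  refine (norm_add_le _ _).trans (add_le_add ?_ ?_)
  · have := vdc_trivial θ (a := a) (b := a + δ) (by linarith)
    linarith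
  · refine vdc_two (θ₁ := θ₁) (θ₂ := θ₂) hd.le (by positivity) hδ (fun x hx => h1 x (hsub hx))
      (fun x hx => h2 x (hsub hx))
      (fun x hx => (h3 x (hsub hx)).continuousAt.continuousWithinAt) ?_
    intro x hx
    have hx' := hsub hx
    have hm := (convex_Icc a b).mul_sub_le_image_sub_of_le_deriv (f := θ₂) (C := lam)
      (fun y hy => (h3 y hy).continuousAt.continuousWithinAt)
      (fun y hy => (h3 y (interior_subset hy)).differentiableAt.differentiableWithinAt)
      (fun y hy => by rw [(h3 y (interior_subset hy)).deriv]; exact hge y (interior_subset hy))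
      a ⟨le_rfl, hab⟩ x hx' hx'.1
    have : lam * δ ≤ lam * (x - a) := by
      apply mul_le_mul_of_nonneg_left _ hl.le
      linarith [hx.1]
    linarith

/-- Third-derivative test, for every splitting length `δ`: the interval is cut at a zero of `θ''`.
The optimal choice is `δ = lam ^ (-1/3)`. -/
lemma vdc_three {θ θ₁ θ₂ θ₃ : ℝ → ℝ} {a b lam δ : ℝ} (hab : a ≤ b) (hl : 0 < lam)
    (hδ : 0 < δ)
    (h1 : ∀ x ∈ Set.Icc a b, HasDerivAt θ (θ₁ x) x)
    (h2 : ∀ x ∈ Set.Icc a b, HasDerivAt θ₁ (θ₂ x) x)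
    (h3 : ∀ x ∈ Set.Icc a b, HasDerivAt θ₂ (θ₃ x) x)
    (hge : ∀ x ∈ Set.Icc a b, lam ≤ θ₃ x) :
    ‖∫ x in a..b, Complex.exp (Complex.I * (θ x : ℂ))‖ ≤
      2 * (δ + 2 * (δ + 2 / (lam * δ * δ))) := by
  have hpos : 0 < δ + 2 * (δ + 2 / (lam * δ * δ)) := by positivity
  -- where `θ'' ≤ 0`, the phase `x ↦ -θ (-x)` is convex with the same third derivative
  have refl : ∀ c, a ≤ c → c ≤ b → θ₂ c ≤ 0 →
      ‖∫ x in a..c, Complex.exp (Complex.I * (θ x : ℂ))‖ ≤ δ + 2 * (δ + 2 / (lam * δ * δ)) := by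
    intro c hac hcb hcneg
    have hm : ∀ x ∈ Set.Icc (-c) (-a), -x ∈ Set.Icc a b := fun x hx =>
      ⟨by linarith [hx.2], by linarith [hx.1]⟩
    rw [← vdc_reflect, ← vdc_conj (fun x => θ (-x))]
    refine vdc_three_aux (θ := fun x => -θ (-x)) (θ₁ := fun x => θ₁ (-x))
      (θ₂ := fun x => -θ₂ (-x)) (θ₃ := fun x => θ₃ (-x))
      (by linarith) hl hδ ?_ ?_ ?_ ?_ ?_
    · intro x hx
      simpa [Pi.neg_def] using (hasDerivAt_reflect (h1 (-x) (hm x hx))).neg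
    · intro x hx
      exact hasDerivAt_reflect (h2 (-x) (hm x hx))
    · intro x hx
      simpa [Pi.neg_def] using (hasDerivAt_reflect (h3 (-x) (hm x hx))).neg
    · exact fun x hx => hge _ (hm x hx)
    · simpa using hcneg
  by_cases ha : 0 ≤ θ₂ a
  · have := vdc_three_aux hab hl hδ h1 h2 h3 hge ha
    linarith
  by_cases hb : θ₂ b ≤ 0
  · have := refl b hab le_rfl hb
    linarith
  push Not at ha hb
  obtain ⟨c, hc', hc0⟩ := intermediate_value_Icc hab
    (fun x hx => (h3 x hx).continuousAt.continuousWithinAt : ContinuousOn θ₂ (Set.Icc a b))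
    ⟨ha.le, hb.le⟩
  have hec : ContinuousOn (fun x => Complex.exp (Complex.I * (θ x : ℂ))) (Set.Icc a b) := by
    have : ContinuousOn (fun x => (θ x : ℂ)) (Set.Icc a b) :=
      Complex.continuous_ofReal.comp_continuousOn
        (fun x hx => (h1 x hx).continuousAt.continuousWithinAt)
    exact Complex.continuous_exp.comp_continuousOn (continuousOn_const.mul this)
  have hsub : Set.Icc c b ⊆ Set.Icc a b := Set.Icc_subset_Icc_left hc'.1
  rw [← intervalIntegral.integral_add_adjacent_intervals (μ := volume) (b := c)
    (by
      apply ContinuousOn.intervalIntegrable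
      rw [Set.uIcc_of_le hc'.1]
      exact hec.mono (Set.Icc_subset_Icc_right hc'.2))
    (by
      apply ContinuousOn.intervalIntegrable
      rw [Set.uIcc_of_le hc'.2]
      exact hec.mono hsub)]
  refine (norm_add_le _ _).trans ?_
  rw [two_mul]
  refine add_le_add (refl c hc'.1 hc'.2 hc0.le) ?_
  exact vdc_three_aux hc'.2 hl hδ (fun x hx => h1 x (hsub hx)) (fun x hx => h2 x (hsub hx))
    (fun x hx => h3 x (hsub hx)) (fun x hx => hge x (hsub hx)) hc0.ge

/-! ### A one-dimensional oscillatory integral with phase `t ξ³ - β / ξ` -/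

/-- Integration by parts removes a non-decreasing amplitude with values in `[0,1]` from an oscillatory
integral whose partial integrals are all bounded by `M`. -/
lemma amplitude_bound {A A' : ℝ → ℝ} {f : ℝ → ℂ} {N M : ℝ} (hN : 1 ≤ N)
    (hf : ContinuousOn f (Set.Ioi 0))
    (hA : ∀ x ∈ Set.Icc 1 N, HasDerivAt A (A' x) x) (hA'c : ContinuousOn A' (Set.Icc 1 N))
    (hA' : ∀ x ∈ Set.Icc 1 N, 0 ≤ A' x) (h0 : 0 ≤ A 1) (h1 : A N ≤ 1)
    (hM : ∀ y ∈ Set.Icc 1 N, ‖∫ x in (1:ℝ)..y, f x‖ ≤ M) :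
    ‖∫ x in (1:ℝ)..N, (A x : ℂ) * f x‖ ≤ 2 * M := by
  have hM0 : 0 ≤ M := (norm_nonneg _).trans (hM 1 ⟨le_rfl, hN⟩)
  have hu : Set.uIcc 1 N = Set.Icc 1 N := Set.uIcc_of_le hN
  have hfi : ∀ y, 1 ≤ y → IntervalIntegrable f volume 1 y := fun y hy => by
    apply ContinuousOn.intervalIntegrable
    rw [Set.uIcc_of_le hy]
    exact hf.mono fun z hz => (zero_lt_one.trans_le hz.1 : (0:ℝ) < z)
  have hI : ∀ y ∈ Set.Icc 1 N, HasDerivAt (fun y => ∫ x in (1:ℝ)..y, f x) (f y) y := fun y hy => by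
    have hy0 : (0:ℝ) < y := zero_lt_one.trans_le hy.1
    exact intervalIntegral.integral_hasDerivAt_right (hfi y hy.1)
      (hf.stronglyMeasurableAtFilter isOpen_Ioi y hy0) (hf.continuousAt (Ioi_mem_nhds hy0))
  have hmem : ∀ x ∈ Set.uIcc 1 N, x ∈ Set.Icc 1 N := fun x hx => hu ▸ hx
  have ibp := intervalIntegral.integral_mul_deriv_eq_deriv_mul (a := 1) (b := N)
    (u := fun x => (A x : ℂ)) (u' := fun x => (A' x : ℂ))
    (v := fun y => ∫ x in (1:ℝ)..y, f x) (v' := f)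
    (fun x hx => (hA x (hmem x hx)).ofReal_comp) (fun x hx => hI x (hmem x hx))
    (by
      apply ContinuousOn.intervalIntegrable
      rw [hu]
      exact Complex.continuous_ofReal.comp_continuousOn hA'c)
    (hfi N hN)
  have hAmono : A N - A 1 = ∫ x in (1:ℝ)..N, A' x := by
    rw [intervalIntegral.integral_eq_sub_of_hasDerivAt (f := A) (fun x hx => hA x (hmem x hx))]
    apply ContinuousOn.intervalIntegrable
    rwa [hu]
  have hAnn : 0 ≤ A N - A 1 := by
    rw [hAmono]
    exact intervalIntegral.integral_nonneg hN hA'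
  have h2 : ‖∫ x in (1:ℝ)..N, (A' x : ℂ) * ∫ z in (1:ℝ)..x, f z‖ ≤ (A N - A 1) * M := by
    rw [hAmono, ← intervalIntegral.integral_mul_const]
    apply intervalIntegral.norm_integral_le_of_norm_le hN
    · filter_upwards with x hx
      have hx' := Set.Ioc_subset_Icc_self hx
      rw [norm_mul, Complex.norm_real, Real.norm_eq_abs, abs_of_nonneg (hA' x hx')]
      exact mul_le_mul_of_nonneg_left (hM x hx') (hA' x hx')
    · apply ContinuousOn.intervalIntegrable
      rw [hu]
      exact hA'c.mul continuousOn_const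
  rw [ibp]
  simp only [intervalIntegral.integral_same, mul_zero, sub_zero]
  refine (norm_sub_le _ _).trans ((add_le_add_left ?_ _).trans (?_ : A N * M + _ ≤ _))
  · rw [norm_mul, Complex.norm_real, Real.norm_eq_abs, abs_of_nonneg (by linarith)]
    exact mul_le_mul_of_nonneg_left (hM N ⟨hN, le_rfl⟩) (by linarith)
  · nlinarith

/-- The phase in `ξ₁` left over after the Gaussian integration in `ξ₂`. -/
def phase (t y β ξ : ℝ) : ℝ := 2 * Real.pi * y * ξ + t * ξ ^ 3 - β / ξ

lemma phase_cont (t y β : ℝ) :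
    ContinuousOn (fun ξ => Complex.exp (Complex.I * (phase t y β ξ : ℂ))) (Set.Ioi 0) := by
  have : ContinuousOn (phase t y β) (Set.Ioi 0) := by
    unfold phase
    apply ContinuousOn.sub (by fun_prop)
    exact continuousOn_const.div continuousOn_id (fun x hx => (ne_of_gt hx : x ≠ 0))
  exact Complex.continuous_exp.comp_continuousOn
    (continuousOn_const.mul (Complex.continuous_ofReal.comp_continuousOn this))

/-- The one-dimensional oscillatory integral, uniformly in `y`, `α`, `β` and `N`. The third derivative of
`-β / ξ` is `6 β / ξ ^ 4 ≥ 0`, so the phase still has third derivative at least `6 t`. -/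
lemma osc_bound_pos {t y α β N : ℝ} (ht : 0 < t) (hβ : 0 ≤ β) (hα : 0 ≤ α) (hN : 1 ≤ N) :
    ‖∫ ξ in (1:ℝ)..N, (Real.exp (-(α / ξ)) : ℂ) * Complex.exp (Complex.I * (phase t y β ξ : ℂ))‖
      ≤ 16 * t ^ (-(1:ℝ)/3) := by
  set δ := t ^ (-(1:ℝ)/3) with hδ
  have hδ0 : 0 < δ := Real.rpow_pos_of_pos ht _
  have hδ3 : t * δ ^ 3 = 1 := by
    rw [hδ, ← Real.rpow_natCast, ← Real.rpow_mul ht.le]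
    norm_num [Real.rpow_neg_one]
    exact mul_inv_cancel₀ ht.ne'
  have hne : ∀ x : ℝ, 1 ≤ x → x ≠ 0 := fun x hx => (zero_lt_one.trans_le hx).ne'
  have key := amplitude_bound (A := fun ξ => Real.exp (-(α / ξ)))
    (A' := fun ξ => Real.exp (-(α / ξ)) * (α / ξ ^ 2))
    (f := fun ξ => Complex.exp (Complex.I * (phase t y β ξ : ℂ))) (M := 8 * δ) hN
    (phase_cont t y β)
    (fun x hx => by
      have := (((hasDerivAt_inv (hne x hx.1)).const_mul α).neg).exp
      refine (this.congr_of_eventuallyEq (Filter.Eventually.of_forall fun z => ?_)).congr_deriv ?_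
      · simp [div_eq_mul_inv]
      · simp [div_eq_mul_inv])
    (by
      apply ContinuousOn.mul
      · apply Real.continuous_exp.comp_continuousOn
        exact (continuousOn_const.div continuousOn_id (fun x hx => hne x hx.1)).neg
      · exact continuousOn_const.div (continuousOn_id.pow 2)
          (fun x hx => pow_ne_zero 2 (hne x hx.1)))
    (fun x hx => by positivity) (by positivity)
    (by
      apply Real.exp_le_one_iff.2
      have : 0 ≤ α / N := div_nonneg hα (by linarith)
      linarith)
    (fun b hb => by
      have := vdc_three (θ := phase t y β) (θ₁ := fun x => 2 * Real.pi * y + 3 * t * x ^ 2 + β / x ^ 2)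
        (θ₂ := fun x => 6 * t * x - 2 * β / x ^ 3) (θ₃ := fun x => 6 * t + 6 * β / x ^ 4)
        (a := 1) (b := b) (lam := 6 * t) (δ := δ) hb.1 (by positivity) hδ0
        (fun x hx => by
          have h0 := hne x hx.1
          have := (((hasDerivAt_id x).const_mul (2 * Real.pi * y)).add
            ((hasDerivAt_pow 3 x).const_mul t)).sub ((hasDerivAt_inv h0).const_mul β)
          refine (this.congr_of_eventuallyEq (Filter.Eventually.of_forall fun z => ?_)).congr_deriv ?_
          · simp [phase, div_eq_mul_inv]
          · simp
            field_simp
            try ring)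
        (fun x hx => by
          have h0 := hne x hx.1
          have := (((hasDerivAt_pow 2 x).const_mul (3 * t)).const_add (2 * Real.pi * y)).add
            (((hasDerivAt_pow 2 x).inv (pow_ne_zero 2 h0)).const_mul β)
          refine (this.congr_of_eventuallyEq (Filter.Eventually.of_forall fun z => ?_)).congr_deriv ?_
          · simp [div_eq_mul_inv]
          · simp
            field_simp
            try ring)
        (fun x hx => by
          have h0 := hne x hx.1
          have := ((hasDerivAt_id x).const_mul (6 * t)).sub
            (((hasDerivAt_pow 3 x).inv (pow_ne_zero 3 h0)).const_mul (2 * β))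
          refine (this.congr_of_eventuallyEq (Filter.Eventually.of_forall fun z => ?_)).congr_deriv ?_
          · simp [div_eq_mul_inv]
          · simp
            field_simp
            try ring)
        (fun x hx => by
          have : 0 ≤ 6 * β / x ^ 4 := by positivity
          linarith)
      refine this.trans ?_
      have e : 2 / (6 * t * δ * δ) = δ / 3 := by
        field_simp
        nlinarith
      rw [e]
      linarith)
  refine key.trans (by linarith)

/-- `osc_bound_pos` for `t` of either sign, by complex conjugation. The sign condition on `t * β` makes
the third derivatives of the two terms `t ξ ^ 3` and `-β / ξ` agree in sign. -/
lemma osc_bound {t y α β N : ℝ} (ht : t ≠ 0) (hβ : 0 ≤ t * β) (hα : 0 ≤ α) (hN : 1 ≤ N) :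
    ‖∫ ξ in (1:ℝ)..N, (Real.exp (-(α / ξ)) : ℂ) * Complex.exp (Complex.I * (phase t y β ξ : ℂ))‖
      ≤ 16 * |t| ^ (-(1:ℝ)/3) := by
  rcases lt_or_gt_of_ne ht with h | h
  · have hβ' : 0 ≤ -β := by nlinarith
    have := osc_bound_pos (t := -t) (y := -y) (β := -β) (α := α) (neg_pos.2 h) hβ' hα hN
    rw [abs_of_neg h]
    refine le_trans (le_of_eq ?_) this
    rw [intervalIntegral.integral_of_le hN, intervalIntegral.integral_of_le hN,
      ← Complex.norm_conj, ← integral_conj]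
    congr 2
    ext x
    rw [map_mul, Complex.conj_ofReal, ← Complex.exp_conj, map_mul, Complex.conj_ofReal,
      Complex.conj_I]
    have : phase (-t) (-y) (-β) x = - phase t y β x := by unfold phase; ring
    rw [this]
    push_cast
    ring_nf
  · rw [abs_of_pos h]
    exact osc_bound_pos h (by nlinarith) hα hN

/-! ### The dispersive kernel estimate -/

lemma cpow_half_mul {r : ℝ} (hr : 0 < r) {w : ℂ} (hw : w ≠ 0) :
    ((r : ℂ) * w) ^ (1 / 2 : ℂ) = ((r ^ (1 / 2 : ℝ) : ℝ) : ℂ) * w ^ (1 / 2 : ℂ) := by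
  rw [Complex.cpow_def_of_ne_zero (mul_ne_zero (by exact_mod_cast hr.ne') hw),
    Complex.cpow_def_of_ne_zero hw, Complex.log_ofReal_mul hr hw, add_mul, Complex.exp_add,
    Real.rpow_def_of_pos hr]
  push_cast
  rfl

/-- The weight `w(ξ₁)²`. It dominates both `1` and `|ξ₁| ^ (4/9)`, and is chosen so that
`w² |ξ₁| ^ (-1/2)` equals `1` for `|ξ₁| ≥ 1`. -/
def wsq (a : ℝ) : ℝ := max 1 (|a| ^ (1 / 2 : ℝ))

lemma one_le_wsq (a : ℝ) : 1 ≤ wsq a := le_max_left _ _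

lemma wsq_pos (a : ℝ) : 0 < wsq a := zero_lt_one.trans_le (one_le_wsq a)

lemma continuous_wsq : Continuous wsq := by
  unfold wsq
  exact continuous_const.max (continuous_abs.rpow_const (fun x => Or.inr (by norm_num)))

/-- The truncated amplitude `1_{|ξ₁| ≤ N} w(ξ₁)² exp (-δ |ξ₁| ξ₂²)`. The factor `|ξ₁|` in the
exponent makes the `ξ₂`-integral homogeneous in `ξ₁`. -/
def rho (N δ : ℝ) (ξ : ℝ × ℝ) : ℝ :=
  (Set.Icc (-N) N).indicator wsq ξ.1 * Real.exp (-(δ * |ξ.1|) * ξ.2 ^ 2)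

/-- The full phase `2π y · ξ + t ξ₁ (ξ₁² + ξ₂²)`. -/
def ph (y : ℝ × ℝ) (t : ℝ) (ξ : ℝ × ℝ) : ℝ :=
  2 * Real.pi * (y.1 * ξ.1 + y.2 * ξ.2) + t * ξ.1 * (ξ.1 ^ 2 + ξ.2 ^ 2)

lemma rho_nonneg (N δ : ℝ) (ξ : ℝ × ℝ) : 0 ≤ rho N δ ξ :=
  mul_nonneg (Set.indicator_nonneg (fun a _ => (wsq_pos a).le) _) (Real.exp_pos _).le

lemma measurable_rho (N δ : ℝ) : Measurable (rho N δ) := by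
  unfold rho
  refine Measurable.mul ?_ ?_
  · exact (continuous_wsq.measurable.indicator measurableSet_Icc).comp measurable_fst
  · exact Continuous.measurable (by fun_prop)

/-- The power `|x| ^ r` is locally integrable for `r > -1`. -/
lemma integrableOn_abs_rpow {r : ℝ} (hr : -1 < r) {N : ℝ} (hN : 0 ≤ N) :
    IntegrableOn (fun x : ℝ => |x| ^ r) (Set.Icc (-N) N) := by
  have h1 : IntervalIntegrable (fun x : ℝ => |x| ^ r) volume 0 N := by
    refine (intervalIntegral.intervalIntegrable_rpow' (a := 0) (b := N) hr).congr ?_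
    intro x hx
    rw [Set.uIoc_of_le hN] at hx
    simp [abs_of_pos hx.1]
  have h2 : IntervalIntegrable (fun x : ℝ => |x| ^ r) volume (-N) 0 := by
    have := (IntervalIntegrable.iff_comp_neg (f := fun x : ℝ => |x| ^ r) (a := 0) (b := N)).1 h1
    simpa using this.symm
  have := (h2.trans h1)
  rwa [intervalIntegrable_iff_integrableOn_Icc_of_le (by linarith)] at this

lemma integrable_rho {N δ : ℝ} (hN : 0 ≤ N) (hδ : 0 < δ) : Integrable (rho N δ) := by
  rw [Measure.volume_eq_prod, integrable_prod_iff (measurable_rho N δ).aestronglyMeasurable]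
  have hne : ∀ᵐ a : ℝ, a ≠ 0 := by simp [ae_iff, measure_singleton]
  constructor
  · filter_upwards [hne] with a ha
    have : 0 < δ * |a| := mul_pos hδ (abs_pos.2 ha)
    exact (integrable_exp_neg_mul_sq this).const_mul ((Set.Icc (-N) N).indicator wsq a)
  · have e : ∀ a : ℝ, ∫ b, ‖rho N δ (a, b)‖ =
        (Set.Icc (-N) N).indicator (fun a => wsq a * √(Real.pi / (δ * |a|))) a := by
      intro a
      simp only [Real.norm_eq_abs, abs_of_nonneg (rho_nonneg _ _ _)]
      simp only [rho, integral_const_mul, integral_gaussian]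
      by_cases h : a ∈ Set.Icc (-N) N <;> simp [h]
    simp_rw [e]
    rw [integrable_indicator_iff measurableSet_Icc]
    have h2 : ∀ a : ℝ, √(Real.pi / (δ * |a|)) = √(Real.pi / δ) * |a| ^ (-(1:ℝ)/2) := by
      intro a
      rw [← div_div, Real.sqrt_div (by positivity), neg_div, Real.rpow_neg (abs_nonneg a),
        ← Real.sqrt_eq_rpow, div_eq_mul_inv]
    simp_rw [h2]
    apply IntegrableOn.continuousOn_mul continuous_wsq.continuousOn _ isCompact_Icc
    exact (integrableOn_abs_rpow (by norm_num) hN).const_mul _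

/-- The `ξ₂`-integral of the truncated kernel at frequency `a > 0`, computed as a Gaussian. -/
lemma inner_gaussian {δ t y2 a : ℝ} (hδ : 0 < δ) (ha : 0 < a) :
    ∫ b : ℝ, ((Real.exp (-(δ * a) * b ^ 2) : ℝ) : ℂ) *
        Complex.exp (Complex.I * ((2 * Real.pi * (y2 * b) + t * a * b ^ 2 : ℝ) : ℂ)) =
      ((a ^ (-(1:ℝ)/2) : ℝ) : ℂ) * ((Real.pi : ℂ) / (δ - t * Complex.I)) ^ (1 / 2 : ℂ) *
        (Real.exp (-(Real.pi ^ 2 * y2 ^ 2 * δ / (δ ^ 2 + t ^ 2) / a)) *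
          Complex.exp (Complex.I *
            ((-(Real.pi ^ 2 * y2 ^ 2 * t / (δ ^ 2 + t ^ 2) / a) : ℝ) : ℂ))) := by
  set z : ℂ := δ - t * Complex.I with hz
  have hz0 : z ≠ 0 := fun h => by
    have := congrArg Complex.re h
    simp [hz] at this
    exact hδ.ne' this
  have haC : (a : ℂ) ≠ 0 := by exact_mod_cast ha.ne'
  have hπ : (Real.pi : ℂ) ≠ 0 := by exact_mod_cast Real.pi_ne_zero
  have hD : ((δ : ℂ) ^ 2 + (t : ℂ) ^ 2) ≠ 0 := by
    have : 0 < δ ^ 2 + t ^ 2 := by positivity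
    exact_mod_cast this.ne'
  have hinv : z⁻¹ = (δ + t * Complex.I) / ((δ : ℂ) ^ 2 + (t : ℂ) ^ 2) := by
    rw [inv_eq_one_div, div_eq_div_iff hz0 hD, hz]
    ring_nf
    simp [Complex.I_sq]
  have h := integral_cexp_quadratic (b := -((a : ℂ) * z)) (by simp [hz]; positivity)
    (2 * Real.pi * y2 * Complex.I) 0
  have e1 : ∀ b : ℝ, ((Real.exp (-(δ * a) * b ^ 2) : ℝ) : ℂ) *
      Complex.exp (Complex.I * ((2 * Real.pi * (y2 * b) + t * a * b ^ 2 : ℝ) : ℂ)) =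
      Complex.exp (-((a : ℂ) * z) * b ^ 2 + (2 * Real.pi * y2 * Complex.I) * b + 0) := by
    intro b
    rw [Complex.ofReal_exp, ← Complex.exp_add]
    congr 1
    push_cast
    rw [hz]
    ring
  simp_rw [e1, h]
  congr 1
  · have : (Real.pi : ℂ) / (- -((a : ℂ) * z)) = ((a⁻¹ : ℝ) : ℂ) * ((Real.pi : ℂ) / z) := by
      push_cast
      field_simp
    rw [this, cpow_half_mul (inv_pos.2 ha) (div_ne_zero hπ hz0)]
    rw [neg_div, Real.rpow_neg ha.le, Real.inv_rpow ha.le]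
  · rw [Complex.ofReal_exp, ← Complex.exp_add]
    congr 1
    have : (0 : ℂ) - (2 * Real.pi * y2 * Complex.I) ^ 2 / (4 * -((a : ℂ) * z)) =
        - (Real.pi ^ 2 * y2 ^ 2 / a) * z⁻¹ := by
      field_simp
      ring_nf
      simp [Complex.I_sq]
    rw [this, hinv]
    push_cast
    field_simp
    ring

/-- The integrand in `ξ₁ = a > 0` of the kernel, with the integration in `ξ₂` carried out. -/
def halfInt (δ t y1 y2 a : ℝ) : ℂ :=
  (wsq a : ℂ) * Complex.exp (Complex.I * ((2 * Real.pi * (y1 * a) + t * a ^ 3 : ℝ) : ℂ)) *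
    ∫ b : ℝ, ((Real.exp (-(δ * a) * b ^ 2) : ℝ) : ℂ) *
        Complex.exp (Complex.I * ((2 * Real.pi * (y2 * b) + t * a * b ^ 2 : ℝ) : ℂ))

lemma halfInt_eq {δ t y1 y2 a : ℝ} (hδ : 0 < δ) (ha : 0 < a) :
    halfInt δ t y1 y2 a = ((Real.pi : ℂ) / (δ - t * Complex.I)) ^ (1 / 2 : ℂ) *
      (((wsq a * a ^ (-(1:ℝ)/2) : ℝ) : ℂ) *
      (Real.exp (-(Real.pi ^ 2 * y2 ^ 2 * δ / (δ ^ 2 + t ^ 2) / a)) *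
        Complex.exp (Complex.I * (phase t y1 (Real.pi ^ 2 * y2 ^ 2 * t / (δ ^ 2 + t ^ 2)) a : ℂ)))) := by
  rw [halfInt, inner_gaussian hδ ha]
  have : Complex.exp (Complex.I * (phase t y1 (Real.pi ^ 2 * y2 ^ 2 * t / (δ ^ 2 + t ^ 2)) a : ℂ)) =
      Complex.exp (Complex.I * ((2 * Real.pi * (y1 * a) + t * a ^ 3 : ℝ) : ℂ)) *
      Complex.exp (Complex.I *
            ((-(Real.pi ^ 2 * y2 ^ 2 * t / (δ ^ 2 + t ^ 2) / a) : ℝ) : ℂ)) := by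
    rw [← Complex.exp_add]
    congr 1
    unfold phase
    push_cast
    ring
  rw [this]
  push_cast
  ring

lemma norm_cpow_half_le {δ t : ℝ} (ht : t ≠ 0) :
    ‖((Real.pi : ℂ) / (δ - t * Complex.I)) ^ (1 / 2 : ℂ)‖ ≤ 2 * |t| ^ (-(1:ℝ)/2) := by
  have e : (1 / 2 : ℂ) = ((1 / 2 : ℝ) : ℂ) := by push_cast; rfl
  have h1 : |t| ≤ ‖(δ : ℂ) - t * Complex.I‖ := by
    have := Complex.abs_im_le_norm ((δ : ℂ) - t * Complex.I)
    simpa using this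
  have ht' : 0 < |t| := abs_pos.2 ht
  rw [e, Complex.norm_cpow_real, norm_div, Complex.norm_real, Real.norm_eq_abs,
    abs_of_pos Real.pi_pos]
  calc (Real.pi / ‖(δ : ℂ) - t * Complex.I‖) ^ (1 / 2 : ℝ) ≤ (2 ^ 2 / |t|) ^ (1 / 2 : ℝ) := by
        apply Real.rpow_le_rpow (by positivity) _ (by norm_num)
        gcongr
        linarith [Real.pi_le_four]
    _ = _ := by
        rw [Real.div_rpow (by norm_num) ht'.le, ← Real.sqrt_eq_rpow (2 ^ 2),
          Real.sqrt_sq (by norm_num), neg_div, Real.rpow_neg ht'.le, div_eq_mul_inv]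

lemma continuousOn_halfExpr (t y α β : ℝ) :
    ContinuousOn (fun a : ℝ => (Real.exp (-(α / a)) : ℂ) *
      Complex.exp (Complex.I * (phase t y β a : ℂ))) (Set.Ioi 0) := by
  refine ContinuousOn.mul ?_ (phase_cont t y β)
  apply Complex.continuous_ofReal.comp_continuousOn
  apply Real.continuous_exp.comp_continuousOn
  exact (continuousOn_const.div continuousOn_id
    (fun (x : ℝ) (hx : 0 < x) => (ne_of_gt hx : x ≠ 0))).neg

lemma wsq_small {a : ℝ} (h0 : 0 ≤ a) (h1 : a ≤ 1) : wsq a = 1 := by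
  unfold wsq
  rw [abs_of_nonneg h0]
  exact max_eq_left (Real.rpow_le_one h0 h1 (by norm_num))

lemma wsq_large {a : ℝ} (h1 : 1 ≤ a) : wsq a * a ^ (-(1:ℝ)/2) = 1 := by
  have h0 : 0 < a := by linarith
  unfold wsq
  rw [abs_of_pos h0, max_eq_right (Real.one_le_rpow h1 (by norm_num)), ← Real.rpow_add h0]
  norm_num

/-- The factor `|t| ^ (-1/2)` comes from the Gaussian integral in `ξ₂`. On `0 < ξ₁ ≤ 1` the remaining
amplitude `ξ₁ ^ (-1/2)` is integrable; on `ξ₁ ≥ 1` the weight cancels it and `osc_bound` gives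
`|t| ^ (-1/3)`. -/
lemma half_bound {δ t y1 y2 N : ℝ} (hδ : 0 < δ) (ht : t ≠ 0) (hN : 1 ≤ N) :
    ‖∫ a in (0:ℝ)..N, halfInt δ t y1 y2 a‖ ≤
      2 * |t| ^ (-(1:ℝ)/2) * (2 + 16 * |t| ^ (-(1:ℝ)/3)) := by
  set α := Real.pi ^ 2 * y2 ^ 2 * δ / (δ ^ 2 + t ^ 2) with hα
  set β := Real.pi ^ 2 * y2 ^ 2 * t / (δ ^ 2 + t ^ 2) with hβ
  set E : ℝ → ℂ := fun a => (Real.exp (-(α / a)) : ℂ) *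
    Complex.exp (Complex.I * (phase t y1 β a : ℂ)) with hE
  have hα0 : 0 ≤ α := by positivity
  have hβ0 : 0 ≤ t * β := by
    have : t * β = Real.pi ^ 2 * y2 ^ 2 * t ^ 2 / (δ ^ 2 + t ^ 2) := by rw [hβ]; ring
    rw [this]; positivity
  have hEc : ContinuousOn E (Set.Ioi 0) := continuousOn_halfExpr t y1 α β
  have hEn : ∀ a, 0 < a → ‖E a‖ ≤ 1 := fun a ha => by
    rw [hE]
    simp only [norm_mul, norm_exp_I_mul, mul_one, Complex.norm_real, Real.norm_eq_abs,
      Real.abs_exp]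
    apply Real.exp_le_one_iff.2
    have : 0 ≤ α / a := div_nonneg hα0 ha.le
    linarith
  have hEq : ∫ a in (0:ℝ)..N, halfInt δ t y1 y2 a =
      ((Real.pi : ℂ) / (δ - t * Complex.I)) ^ (1 / 2 : ℂ) *
        ∫ a in (0:ℝ)..N, ((wsq a * a ^ (-(1:ℝ)/2) : ℝ) : ℂ) * E a := by
    rw [← intervalIntegral.integral_const_mul]
    apply intervalIntegral.integral_congr_ae
    filter_upwards with a ha
    rw [Set.uIoc_of_le (by linarith)] at ha
    exact halfInt_eq hδ ha.1
  have hInt : IntervalIntegrable (fun a => a ^ (-(1:ℝ)/2)) volume 0 1 :=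
    intervalIntegral.intervalIntegrable_rpow' (by norm_num)
  have hb : ∀ a ∈ Set.Ioc (0:ℝ) 1,
      ‖((wsq a * a ^ (-(1:ℝ)/2) : ℝ) : ℂ) * E a‖ ≤ a ^ (-(1:ℝ)/2) := fun a ha => by
    rw [norm_mul, Complex.norm_real, wsq_small ha.1.le ha.2, one_mul, Real.norm_eq_abs,
      abs_of_nonneg (Real.rpow_nonneg ha.1.le _)]
    exact mul_le_of_le_one_right (Real.rpow_nonneg ha.1.le _) (hEn a ha.1)
  have i1 : IntervalIntegrable (fun a => ((wsq a * a ^ (-(1:ℝ)/2) : ℝ) : ℂ) * E a) volume 0 1 := by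
    refine hInt.mono_fun' ?_ ?_
    · rw [Set.uIoc_of_le zero_le_one]
      apply ContinuousOn.aestronglyMeasurable _ measurableSet_Ioc
      refine ContinuousOn.mul ?_ (hEc.mono fun x hx => hx.1)
      apply Complex.continuous_ofReal.comp_continuousOn
      exact continuous_wsq.continuousOn.mul
        (continuousOn_id.rpow_const (fun x hx => Or.inl (ne_of_gt hx.1)))
    · rw [Set.uIoc_of_le zero_le_one]
      exact (ae_restrict_iff' measurableSet_Ioc).2 (Filter.Eventually.of_forall hb)
  have i2 : IntervalIntegrable (fun a => ((wsq a * a ^ (-(1:ℝ)/2) : ℝ) : ℂ) * E a) volume 1 N := by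
    apply ContinuousOn.intervalIntegrable
    rw [Set.uIcc_of_le hN]
    have hp : ∀ x ∈ Set.Icc 1 N, (0:ℝ) < x := fun x hx => zero_lt_one.trans_le hx.1
    refine ContinuousOn.mul ?_ (hEc.mono hp)
    apply Complex.continuous_ofReal.comp_continuousOn
    exact continuous_wsq.continuousOn.mul
      (continuousOn_id.rpow_const (fun x hx => Or.inl (hp x hx).ne'))
  rw [hEq, norm_mul, ← intervalIntegral.integral_add_adjacent_intervals i1 i2]
  refine mul_le_mul (norm_cpow_half_le ht) ?_ (norm_nonneg _) (by positivity)
  refine (norm_add_le _ _).trans (add_le_add ?_ ?_)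
  · refine (intervalIntegral.norm_integral_le_of_norm_le zero_le_one
      (Filter.Eventually.of_forall hb) hInt).trans ?_
    rw [integral_rpow (by norm_num)]
    norm_num
  · have : ∫ a in (1:ℝ)..N, ((wsq a * a ^ (-(1:ℝ)/2) : ℝ) : ℂ) * E a = ∫ a in (1:ℝ)..N, E a := by
      apply intervalIntegral.integral_congr
      intro a ha
      rw [Set.uIcc_of_le hN] at ha
      simp only
      rw [wsq_large ha.1]
      simp
    rw [this]
    exact osc_bound ht hβ0 hα0 hN

/-- The convolution kernel at time `t` of the group weighted by `w²`, with truncated amplitude `rho`. -/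
def Ker (N δ t : ℝ) (y : ℝ × ℝ) : ℂ :=
  ∫ ξ : ℝ × ℝ, (rho N δ ξ : ℂ) * Complex.exp (Complex.I * (ph y t ξ : ℂ))

lemma continuous_ph : Continuous fun p : (ℝ × ℝ) × ℝ × (ℝ × ℝ) => ph p.1 p.2.1 p.2.2 := by
  unfold ph
  fun_prop

/-- Fubini in `ξ₂`, then reflection of the part with `ξ₁ < 0` onto the positive half-line. -/
lemma Ker_eq {N δ t : ℝ} (hN : 1 ≤ N) (hδ : 0 < δ) (y : ℝ × ℝ) :
    Ker N δ t y = (∫ a in (0:ℝ)..N, halfInt δ t y.1 y.2 a) +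
      ∫ a in (0:ℝ)..N, halfInt δ (-t) (-y.1) y.2 a := by
  have hInt : Integrable (fun ξ : ℝ × ℝ =>
      (rho N δ ξ : ℂ) * Complex.exp (Complex.I * (ph y t ξ : ℂ))) := by
    refine (integrable_rho (by linarith) hδ).ofReal.mul_bdd (c := 1) ?_ ?_
    · apply Continuous.aestronglyMeasurable
      unfold ph
      fun_prop
    · exact Filter.Eventually.of_forall fun ξ => (norm_exp_I_mul _).le
  set J : ℝ → ℂ := fun a => (wsq a : ℂ) *
    Complex.exp (Complex.I * ((2 * Real.pi * (y.1 * a) + t * a ^ 3 : ℝ) : ℂ)) *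
    ∫ b : ℝ, ((Real.exp (-(δ * |a|) * b ^ 2) : ℝ) : ℂ) *
        Complex.exp (Complex.I * ((2 * Real.pi * (y.2 * b) + t * a * b ^ 2 : ℝ) : ℂ)) with hJ
  have hslice : ∀ a : ℝ, ∫ b, (rho N δ (a, b) : ℂ) * Complex.exp (Complex.I * (ph y t (a, b) : ℂ)) =
      (Set.Icc (-N) N).indicator J a := by
    intro a
    by_cases ha : a ∈ Set.Icc (-N) N
    · rw [Set.indicator_of_mem ha, hJ]
      simp only
      rw [← integral_const_mul]
      congr 1
      ext b
      simp only [rho, Set.indicator_of_mem ha, ph]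
      have : (Complex.I * ((2 * Real.pi * (y.1 * a + y.2 * b) + t * a * (a ^ 2 + b ^ 2) : ℝ) : ℂ)) =
        Complex.I * ((2 * Real.pi * (y.1 * a) + t * a ^ 3 : ℝ) : ℂ) +
        Complex.I * ((2 * Real.pi * (y.2 * b) + t * a * b ^ 2 : ℝ) : ℂ) := by
        push_cast; ring
      rw [this, Complex.exp_add]
      push_cast
      ring
    · simp [rho, ha]
  have hJint : IntegrableOn J (Set.Icc (-N) N) := by
    rw [← integrable_indicator_iff measurableSet_Icc]
    have := Integrable.integral_prod_left (by rwa [← Measure.volume_eq_prod] :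
      Integrable (fun ξ : ℝ × ℝ => (rho N δ ξ : ℂ) *
        Complex.exp (Complex.I * (ph y t ξ : ℂ))) (volume.prod volume))
    simpa only [hslice] using this
  have hJI : IntervalIntegrable J volume (-N) N := by
    rwa [intervalIntegrable_iff_integrableOn_Icc_of_le (by linarith)]
  rw [Ker, Measure.volume_eq_prod, integral_prod _ (by rwa [← Measure.volume_eq_prod])]
  simp_rw [hslice]
  rw [integral_indicator measurableSet_Icc, integral_Icc_eq_integral_Ioc,
    ← intervalIntegral.integral_of_le (by linarith : -N ≤ N),
    ← intervalIntegral.integral_add_adjacent_intervals (b := 0)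
      (hJI.mono_set (by
        rw [Set.uIcc_of_le (by linarith), Set.uIcc_of_le (by linarith)]
        exact Set.Icc_subset_Icc_right (by linarith)))
      (hJI.mono_set (by
        rw [Set.uIcc_of_le (by linarith), Set.uIcc_of_le (by linarith)]
        exact Set.Icc_subset_Icc_left (by linarith))), add_comm]
  congr 1
  · apply intervalIntegral.integral_congr
    intro a ha
    rw [Set.uIcc_of_le (by linarith)] at ha
    simp only [hJ, halfInt, abs_of_nonneg ha.1]
  · have := intervalIntegral.integral_comp_neg (a := 0) (b := N) J
    rw [neg_zero] at this
    rw [← this]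
    apply intervalIntegral.integral_congr
    intro a ha
    rw [Set.uIcc_of_le (by linarith)] at ha
    simp only [hJ, halfInt, abs_neg, abs_of_nonneg ha.1, wsq]
    congr 2
    · congr 3
      ring
    · ext b
      congr 4
      ring

/-- The dispersive estimate for the weighted truncated kernel, uniform in the truncation. -/
lemma Ker_bound {N δ t : ℝ} (hN : 1 ≤ N) (hδ : 0 < δ) (ht : t ≠ 0) (ht1 : |t| ≤ 1) (y : ℝ × ℝ) :
    ‖Ker N δ t y‖ ≤ 72 * |t| ^ (-(5:ℝ)/6) := by
  have ht' : 0 < |t| := abs_pos.2 ht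
  have h1 := half_bound (y1 := y.1) (y2 := y.2) hδ ht hN
  have h2 := half_bound (y1 := -y.1) (y2 := y.2) hδ (neg_ne_zero.2 ht) hN
  rw [abs_neg] at h2
  rw [Ker_eq hN hδ]
  have h3 : 1 ≤ |t| ^ (-(1:ℝ)/3) :=
    Real.one_le_rpow_of_pos_of_le_one_of_nonpos ht' ht1 (by norm_num)
  have h4 : |t| ^ (-(5:ℝ)/6) = |t| ^ (-(1:ℝ)/2) * |t| ^ (-(1:ℝ)/3) := by
    rw [← Real.rpow_add ht']
    norm_num
  have h5 : 0 ≤ |t| ^ (-(1:ℝ)/2) := Real.rpow_nonneg ht'.le _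
  refine (norm_add_le _ _).trans ((add_le_add h1 h2).trans ?_)
  rw [h4]
  nlinarith

/-! ### Young's inequality in time -/

/-- The kernel `|r| ^ (-5/6)` produced by the dispersive bound, with value `∞` at `r = 0`. -/
def decay (r : ℝ) : ℝ≥0∞ := (ENNReal.ofReal |r|) ^ (-(5:ℝ)/6)

lemma measurable_decay : Measurable decay := by
  unfold decay
  exact (ENNReal.measurable_ofReal.comp measurable_id.abs).pow_const _

/-- The `9/8`-th power of the `L^{9/8}(-1,1)` norm of `|r| ^ (-5/6)`. -/
def decayInt : ℝ≥0∞ := ∫⁻ r in Set.Icc (-1:ℝ) 1, decay r ^ ((9:ℝ)/8)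

lemma decayInt_lt_top : decayInt < ⊤ := by
  have h := (integrableOn_abs_rpow (r := -(15:ℝ)/16) (by norm_num) (N := 1) (by norm_num)).2
  refine lt_of_le_of_lt (le_of_eq ?_) h
  unfold decayInt
  refine lintegral_congr_ae ?_
  refine ae_restrict_of_ae ?_
  have : ∀ᵐ r : ℝ, r ≠ 0 := by
    simp [ae_iff, measure_singleton]
  filter_upwards [this] with r hr
  have hp : 0 < |r| := abs_pos.2 hr
  unfold decay
  rw [← ENNReal.rpow_mul, ENNReal.ofReal_rpow_of_pos hp,
    Real.enorm_eq_ofReal (Real.rpow_nonneg hp.le _)]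
  norm_num

/-- Time is restricted to the unit interval. -/
abbrev timeMeasure : Measure ℝ := volume.restrict (Set.Icc (0:ℝ) 1)

lemma lintegral_decay_le {s : ℝ} (hs : s ∈ Set.Icc (0:ℝ) 1) :
    ∫⁻ t, decay (s - t) ^ ((9:ℝ)/8) ∂timeMeasure ≤ decayInt := by
  unfold decayInt
  rw [← lintegral_indicator measurableSet_Icc, ← lintegral_indicator measurableSet_Icc,
    ← lintegral_sub_left_eq_self
      ((Set.Icc (-1:ℝ) 1).indicator fun r => decay r ^ ((9:ℝ)/8)) s]
  refine lintegral_mono fun t => ?_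
  by_cases ht : t ∈ Set.Icc (0:ℝ) 1
  · have : s - t ∈ Set.Icc (-1:ℝ) 1 := by
      obtain ⟨h1, h2⟩ := hs; obtain ⟨h3, h4⟩ := ht; constructor <;> linarith
    simp [Set.indicator_of_mem ht, Set.indicator_of_mem this]
  · simp [Set.indicator_of_notMem ht]

lemma decay_neg (r : ℝ) : decay (-r) = decay r := by simp [decay]

lemma lintegral_weight_decay_le {h : ℝ → ℝ≥0∞} (hh : Measurable h) :
    ∫⁻ z, h z.1 * decay (z.1 - z.2) ^ ((9:ℝ)/8) ∂(timeMeasure.prod timeMeasure)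
      ≤ decayInt * ∫⁻ t, h t ∂timeMeasure := by
  have hm : Measurable fun z : ℝ × ℝ => h z.1 * decay (z.1 - z.2) ^ ((9:ℝ)/8) :=
    (hh.comp measurable_fst).mul
      ((measurable_decay.comp (measurable_fst.sub measurable_snd)).pow_const _)
  rw [lintegral_prod _ hm.aemeasurable, ← lintegral_const_mul _ hh]
  refine setLIntegral_mono' measurableSet_Icc fun t ht => ?_
  dsimp only
  have hd : Measurable fun u => decay (t - u) ^ ((9:ℝ)/8) :=
    (measurable_decay.comp (measurable_const.sub measurable_id)).pow_const _
  rw [lintegral_const_mul _ hd, mul_comm]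
  gcongr
  exact lintegral_decay_le ht

/-- Young's inequality for the bilinear form with kernel `|t - s| ^ (-5/6) ∈ L^{9/8}`. -/
lemma young_decay {f : ℝ → ℝ≥0∞} (hf : Measurable f) :
    ∫⁻ z, f z.1 * f z.2 * decay (z.1 - z.2) ∂(timeMeasure.prod timeMeasure)
      ≤ decayInt ^ ((8:ℝ)/9) * (∫⁻ t, f t ^ ((9:ℝ)/5) ∂timeMeasure) ^ ((10:ℝ)/9) := by
  set P := ∫⁻ t, f t ^ ((9:ℝ)/5) ∂timeMeasure with hP
  have hf' : Measurable fun t => f t ^ ((9:ℝ)/5) := hf.pow_const _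
  have hk : Measurable fun z : ℝ × ℝ => decay (z.1 - z.2) ^ ((9:ℝ)/8) :=
    ((measurable_decay.comp (measurable_fst.sub measurable_snd)).pow_const _)
  let F : Fin 3 → ℝ × ℝ → ℝ≥0∞ := ![
    fun z => f z.1 ^ ((9:ℝ)/5) * decay (z.1 - z.2) ^ ((9:ℝ)/8),
    fun z => f z.2 ^ ((9:ℝ)/5) * decay (z.1 - z.2) ^ ((9:ℝ)/8),
    fun z => f z.1 ^ ((9:ℝ)/5) * f z.2 ^ ((9:ℝ)/5)]
  let p : Fin 3 → ℝ := ![4/9, 4/9, 1/9]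
  have hF0 : Measurable (F 0) := (hf'.comp measurable_fst).mul hk
  have hF1 : Measurable (F 1) := (hf'.comp measurable_snd).mul hk
  have hF2 : Measurable (F 2) := (hf'.comp measurable_fst).mul (hf'.comp measurable_snd)
  have key := ENNReal.lintegral_prod_norm_pow_le (μ := timeMeasure.prod timeMeasure)
    Finset.univ (f := F) (p := p)
    (by intro i _; fin_cases i <;> [exact hF0.aemeasurable; exact hF1.aemeasurable; exact hF2.aemeasurable])
    (by simp [Fin.sum_univ_three, p]; norm_num)
    (by intro i _; fin_cases i <;> simp [p] <;> norm_num)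
  simp only [Fin.prod_univ_three] at key
  have e0 : ∫⁻ z, F 0 z ∂(timeMeasure.prod timeMeasure) ≤ decayInt * P :=
    lintegral_weight_decay_le hf'
  have e1 : ∫⁻ z, F 1 z ∂(timeMeasure.prod timeMeasure) ≤ decayInt * P := by
    rw [← lintegral_prod_swap]
    refine le_trans (le_of_eq ?_) (lintegral_weight_decay_le hf')
    refine lintegral_congr fun z => ?_
    simp only [F, Matrix.cons_val_one, Matrix.cons_val_zero, Prod.fst_swap, Prod.snd_swap]
    rw [← decay_neg, neg_sub]
  have e2 : ∫⁻ z, F 2 z ∂(timeMeasure.prod timeMeasure) = P * P :=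
    lintegral_prod_mul hf'.aemeasurable hf'.aemeasurable
  calc _ = ∫⁻ z, F 0 z ^ p 0 * F 1 z ^ p 1 * F 2 z ^ p 2 ∂(timeMeasure.prod timeMeasure) := by
        refine lintegral_congr fun z => ?_
        show _ = (f z.1 ^ ((9:ℝ)/5) * decay (z.1 - z.2) ^ ((9:ℝ)/8)) ^ ((4:ℝ)/9)
          * (f z.2 ^ ((9:ℝ)/5) * decay (z.1 - z.2) ^ ((9:ℝ)/8)) ^ ((4:ℝ)/9)
          * (f z.1 ^ ((9:ℝ)/5) * f z.2 ^ ((9:ℝ)/5)) ^ ((1:ℝ)/9)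
        simp only [ENNReal.mul_rpow_of_nonneg _ _ (show (0:ℝ) ≤ 4/9 by norm_num),
          ENNReal.mul_rpow_of_nonneg _ _ (show (0:ℝ) ≤ 1/9 by norm_num), ← ENNReal.rpow_mul]
        have h1 : ∀ a : ℝ≥0∞, a ^ ((9:ℝ)/5 * (4/9)) * a ^ ((9:ℝ)/5 * (1/9)) = a := fun a => by
          rw [← ENNReal.rpow_add_of_nonneg _ _ (by norm_num) (by norm_num)]; norm_num
        have h2 : ∀ a : ℝ≥0∞, a ^ ((9:ℝ)/8 * (4/9)) * a ^ ((9:ℝ)/8 * (4/9)) = a := fun a => by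
          rw [← ENNReal.rpow_add_of_nonneg _ _ (by norm_num) (by norm_num)]; norm_num
        conv_lhs => rw [← h1 (f z.1), ← h1 (f z.2), ← h2 (decay (z.1 - z.2))]
        ring
    _ ≤ _ := key
    _ ≤ (decayInt * P) ^ p 0 * (decayInt * P) ^ p 1 * (P * P) ^ p 2 := by
        rw [e2]
        gcongr <;> simp [p] <;> norm_num
    _ = _ := by
        show (decayInt * P) ^ ((4:ℝ)/9) * (decayInt * P) ^ ((4:ℝ)/9) * (P * P) ^ ((1:ℝ)/9) = _
        rw [← ENNReal.rpow_add_of_nonneg _ _ (by norm_num) (by norm_num),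
          ENNReal.mul_rpow_of_nonneg _ _ (by norm_num), ENNReal.mul_rpow_of_nonneg _ _ (by norm_num),
          ← ENNReal.rpow_add_of_nonneg _ _ (by norm_num) (by norm_num), mul_assoc,
          ← ENNReal.rpow_add_of_nonneg _ _ (by norm_num) (by norm_num)]
        norm_num

/-! ### The dual Strichartz estimate along a moving point -/

lemma ph_sub (y y' : ℝ × ℝ) (t t' : ℝ) (ξ : ℝ × ℝ) :
    ph (y - y') (t - t') ξ = ph y t ξ - ph y' t' ξ := by
  simp only [ph, Prod.fst_sub, Prod.snd_sub]; ring

/-- The unimodular oscillation `exp (i ph)`. -/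
def osc (y : ℝ × ℝ) (t : ℝ) (ξ : ℝ × ℝ) : ℂ := Complex.exp (Complex.I * (ph y t ξ : ℂ))

lemma norm_osc (y : ℝ × ℝ) (t : ℝ) (ξ : ℝ × ℝ) : ‖osc y t ξ‖ = 1 := norm_exp_I_mul _

lemma continuous_osc : Continuous fun p : (ℝ × ℝ) × ℝ × (ℝ × ℝ) => osc p.1 p.2.1 p.2.2 := by
  unfold osc
  have := continuous_ph
  fun_prop

lemma measurable_osc {α : Type*} [MeasurableSpace α] {y : α → ℝ × ℝ} {t : α → ℝ}
    {ξ : α → ℝ × ℝ} (hy : Measurable y) (ht : Measurable t) (hξ : Measurable ξ) :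
    Measurable fun a => osc (y a) (t a) (ξ a) := by
  have h : Measurable fun a => (y a, t a, ξ a) := hy.prodMk (ht.prodMk hξ)
  have := continuous_osc.measurable.comp h
  simpa only [Function.comp_def] using this

lemma osc_mul_conj (y y' : ℝ × ℝ) (t t' : ℝ) (ξ : ℝ × ℝ) :
    osc y t ξ * (starRingEnd ℂ) (osc y' t' ξ) = osc (y - y') (t - t') ξ := by
  unfold osc
  rw [← Complex.exp_conj, ← Complex.exp_add, ph_sub]
  congr 1
  simp
  ring

/-- The adjoint of the linearized operator sending Fourier data to the wave evaluated at the moving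
point `x t`: a superposition over time of the oscillations `osc (x t) t`. -/
def adj (ψ : ℝ → ℂ) (x : ℝ → ℝ × ℝ) (ξ : ℝ × ℝ) : ℂ :=
  ∫ t, ψ t * osc (x t) t ξ ∂timeMeasure

lemma decay_bound {N δ : ℝ} (hN : 1 ≤ N) (hδ : 0 < δ) {t : ℝ} (ht : |t| ≤ 1) (y : ℝ × ℝ) :
    ‖Ker N δ t y‖ₑ ≤ 72 * decay t := by
  by_cases h0 : t = 0
  · subst h0
    have : decay 0 = ⊤ := by
      unfold decay
      rw [abs_zero, ENNReal.ofReal_zero, ENNReal.zero_rpow_of_neg (by norm_num)]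
    rw [this]; simp
  · have hp : 0 < |t| := abs_pos.2 h0
    have h := ENNReal.ofReal_le_ofReal (Ker_bound hN hδ h0 ht y)
    rw [ofReal_norm, ENNReal.ofReal_mul (by norm_num),
      ← ENNReal.ofReal_rpow_of_pos hp] at h
    simpa [decay] using h

section
variable {ψ : ℝ → ℂ} {x : ℝ → ℝ × ℝ} {B : ℝ}

lemma measurable_osc_comp (hx : Measurable x) :
    Measurable fun p : ℝ × (ℝ × ℝ) => osc (x p.1) p.1 p.2 :=
  measurable_osc (hx.comp measurable_fst) measurable_fst measurable_snd

lemma measurable_adj (hψ : Measurable ψ) (hx : Measurable x) : Measurable (adj ψ x) := by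
  have h : Measurable fun p : ℝ × (ℝ × ℝ) => ψ p.1 * osc (x p.1) p.1 p.2 :=
    (hψ.comp measurable_fst).mul (measurable_osc_comp hx)
  exact (h.stronglyMeasurable.integral_prod_left' (μ := timeMeasure)).measurable

/-- `TT*` by expanding the square: the weighted `L²` norm of `adj ψ x` is a double time integral against
the kernel. -/
lemma TTstar_identity (hψ : Measurable ψ) (hx : Measurable x) (hB : ∀ t, ‖ψ t‖ ≤ B)
    {N δ : ℝ} (hN : 0 ≤ N) (hδ : 0 < δ) :
    Integrable (fun ξ => rho N δ ξ * ‖adj ψ x ξ‖ ^ 2) ∧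
    ((∫ ξ, rho N δ ξ * ‖adj ψ x ξ‖ ^ 2 : ℝ) : ℂ)
      = ∫ z, ψ z.1 * (starRingEnd ℂ) (ψ z.2) * Ker N δ (z.1 - z.2) (x z.1 - x z.2)
          ∂(timeMeasure.prod timeMeasure) := by
  let H : (ℝ × ℝ) × (ℝ × ℝ) → ℂ := fun p =>
    (ψ p.1.1 * (starRingEnd ℂ) (ψ p.1.2)) *
      ((rho N δ p.2 : ℂ) * osc (x p.1.1 - x p.1.2) (p.1.1 - p.1.2) p.2)
  have hB0 : 0 ≤ B := (norm_nonneg _).trans (hB 0)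
  have hHm : Measurable H := by
    have f1 : Measurable fun p : (ℝ × ℝ) × (ℝ × ℝ) => p.1.1 := measurable_fst.comp measurable_fst
    have f2 : Measurable fun p : (ℝ × ℝ) × (ℝ × ℝ) => p.1.2 := measurable_snd.comp measurable_fst
    have h1 : Measurable fun p : (ℝ × ℝ) × (ℝ × ℝ) => ψ p.1.1 := hψ.comp f1
    have h2 : Measurable fun p : (ℝ × ℝ) × (ℝ × ℝ) => (starRingEnd ℂ) (ψ p.1.2) :=
      Complex.continuous_conj.measurable.comp (hψ.comp f2)
    have h3 : Measurable fun p : (ℝ × ℝ) × (ℝ × ℝ) => (rho N δ p.2 : ℂ) :=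
      Complex.measurable_ofReal.comp ((measurable_rho N δ).comp measurable_snd)
    have h4 : Measurable fun p : (ℝ × ℝ) × (ℝ × ℝ) =>
        osc (x p.1.1 - x p.1.2) (p.1.1 - p.1.2) p.2 :=
      measurable_osc ((hx.comp f1).sub (hx.comp f2)) (f1.sub f2) measurable_snd
    exact (h1.mul h2).mul (h3.mul h4)
  have hHi : Integrable H ((timeMeasure.prod timeMeasure).prod volume) := by
    have hdom : Integrable (fun p : (ℝ × ℝ) × (ℝ × ℝ) => (B * B) * rho N δ p.2)
        ((timeMeasure.prod timeMeasure).prod volume) :=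
      (integrable_const (B * B)).mul_prod (integrable_rho hN hδ)
    refine hdom.mono' hHm.aestronglyMeasurable (Filter.Eventually.of_forall fun p => ?_)
    simp only [H, norm_mul, norm_osc, RCLike.norm_conj, Complex.norm_real, Real.norm_eq_abs,
      abs_of_nonneg (rho_nonneg N δ p.2), mul_one]
    gcongr
    · exact rho_nonneg _ _ _
    · exact hB _
    · exact hB _
  have hsq : ∀ ξ, ∫ z, H (z, ξ) ∂(timeMeasure.prod timeMeasure)
      = ((rho N δ ξ * ‖adj ψ x ξ‖ ^ 2 : ℝ) : ℂ) := by
    intro ξ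
    have e : ((‖adj ψ x ξ‖ ^ 2 : ℝ) : ℂ) = adj ψ x ξ * (starRingEnd ℂ) (adj ψ x ξ) := by
      rw [Complex.mul_conj, Complex.normSq_eq_norm_sq]
    rw [Complex.ofReal_mul, e]
    have e2 : (starRingEnd ℂ) (adj ψ x ξ)
        = ∫ t, (starRingEnd ℂ) (ψ t * osc (x t) t ξ) ∂timeMeasure := integral_conj.symm
    rw [e2]
    unfold adj
    rw [← integral_prod_mul, ← integral_const_mul]
    refine integral_congr_ae (Filter.Eventually.of_forall fun z => ?_)
    simp only [H, map_mul]
    rw [← osc_mul_conj]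
    ring
  have hInt : Integrable (fun ξ => ((rho N δ ξ * ‖adj ψ x ξ‖ ^ 2 : ℝ) : ℂ)) := by
    have := hHi.integral_prod_right
    simpa only [hsq] using this
  refine ⟨by simpa only [RCLike.re_to_complex, Complex.ofReal_re] using hInt.re, ?_⟩
  rw [← integral_complex_ofReal]
  simp only [← hsq]
  rw [integral_integral_swap (f := fun ξ z => H (z, ξ)) hHi.swap]
  refine integral_congr_ae (Filter.Eventually.of_forall fun z => ?_)
  simp only [H]
  rw [integral_const_mul]
  rfl

/-- The dual estimate in `L^{9/5}` of time, for the truncated weight. -/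
lemma dual_trunc (hψ : Measurable ψ) (hx : Measurable x) (hB : ∀ t, ‖ψ t‖ ≤ B)
    {N δ : ℝ} (hN : 1 ≤ N) (hδ : 0 < δ) :
    ∫⁻ ξ, ENNReal.ofReal (rho N δ ξ) * ‖adj ψ x ξ‖ₑ ^ 2
      ≤ 72 * (decayInt ^ ((8:ℝ)/9) * (∫⁻ t, ‖ψ t‖ₑ ^ ((9:ℝ)/5) ∂timeMeasure) ^ ((10:ℝ)/9)) := by
  obtain ⟨h1, h2⟩ := TTstar_identity hψ hx hB (zero_le_one.trans hN) hδ
  have h0 : ∀ ξ, 0 ≤ rho N δ ξ * ‖adj ψ x ξ‖ ^ 2 := fun ξ =>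
    mul_nonneg (rho_nonneg _ _ _) (sq_nonneg _)
  calc _ = ∫⁻ ξ, ENNReal.ofReal (rho N δ ξ * ‖adj ψ x ξ‖ ^ 2) := by
        refine lintegral_congr fun ξ => ?_
        rw [ENNReal.ofReal_mul (rho_nonneg _ _ _), ENNReal.ofReal_pow (norm_nonneg _),
          ofReal_norm]
    _ = ENNReal.ofReal (∫ ξ, rho N δ ξ * ‖adj ψ x ξ‖ ^ 2) :=
        (ofReal_integral_eq_lintegral_ofReal h1 (Filter.Eventually.of_forall h0)).symm
    _ = ‖((∫ ξ, rho N δ ξ * ‖adj ψ x ξ‖ ^ 2 : ℝ) : ℂ)‖ₑ := by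
        rw [← ofReal_norm, Complex.norm_real, Real.norm_of_nonneg (integral_nonneg h0)]
    _ ≤ ∫⁻ z, ‖ψ z.1 * (starRingEnd ℂ) (ψ z.2) * Ker N δ (z.1 - z.2) (x z.1 - x z.2)‖ₑ
          ∂(timeMeasure.prod timeMeasure) := by
        rw [h2]; exact enorm_integral_le_lintegral_enorm _
    _ ≤ ∫⁻ z, 72 * (‖ψ z.1‖ₑ * ‖ψ z.2‖ₑ * decay (z.1 - z.2))
          ∂(timeMeasure.prod timeMeasure) := by
        rw [Measure.prod_restrict]
        refine setLIntegral_mono' (measurableSet_Icc.prod measurableSet_Icc) fun z hz => ?_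
        obtain ⟨⟨a1, a2⟩, a3, a4⟩ := hz
        have hz1 : |z.1 - z.2| ≤ 1 := by rw [abs_le]; constructor <;> linarith
        have hc : ‖(starRingEnd ℂ) (ψ z.2)‖ₑ = ‖ψ z.2‖ₑ := by
          rw [← ofReal_norm, RCLike.norm_conj, ofReal_norm]
        rw [enorm_mul, enorm_mul, hc]
        calc _ ≤ ‖ψ z.1‖ₑ * ‖ψ z.2‖ₑ * (72 * decay (z.1 - z.2)) := by
              gcongr; exact decay_bound hN hδ hz1 _
          _ = _ := by ring
    _ ≤ _ := by
        rw [lintegral_const_mul' _ _ (by simp)]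
        gcongr
        exact young_decay hψ.enorm

/-- The truncation is removed along `N = n + 1`, `δ = 1 / (n + 1)`. -/
lemma tendsto_rho (ξ : ℝ × ℝ) :
    Filter.Tendsto (fun n : ℕ => rho (n + 1) (1 / ((n:ℝ) + 1)) ξ) Filter.atTop
      (nhds (wsq ξ.1)) := by
  have h1 : Filter.Tendsto (fun n : ℕ =>
      Real.exp (-(1 / ((n:ℝ) + 1) * |ξ.1|) * ξ.2 ^ 2)) Filter.atTop (nhds 1) := by
    have := (((tendsto_one_div_add_atTop_nhds_zero_nat (𝕜 := ℝ)).mul_const |ξ.1|).neg.mul_const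
      (ξ.2 ^ 2)).rexp
    simpa using this
  have h2 : ∀ᶠ n : ℕ in Filter.atTop,
      wsq ξ.1 * Real.exp (-(1 / ((n:ℝ) + 1) * |ξ.1|) * ξ.2 ^ 2)
        = rho (n + 1) (1 / ((n:ℝ) + 1)) ξ := by
    obtain ⟨k, hk⟩ := exists_nat_ge |ξ.1|
    filter_upwards [Filter.eventually_ge_atTop k] with n hn
    have hkn : (k:ℝ) ≤ n := by exact_mod_cast hn
    unfold rho
    rw [Set.indicator_of_mem]
    exact abs_le.1 (by linarith)
  simpa using (h1.const_mul (wsq ξ.1)).congr' h2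

/-- The dual estimate in `L^{9/5}` of time, with the full weight, by Fatou's lemma. -/
lemma dual_full (hψ : Measurable ψ) (hx : Measurable x) (hB : ∀ t, ‖ψ t‖ ≤ B) :
    ∫⁻ ξ, ENNReal.ofReal (wsq ξ.1) * ‖adj ψ x ξ‖ₑ ^ 2
      ≤ 72 * (decayInt ^ ((8:ℝ)/9) * (∫⁻ t, ‖ψ t‖ₑ ^ ((9:ℝ)/5) ∂timeMeasure) ^ ((10:ℝ)/9)) := by
  have hm := measurable_adj hψ hx
  calc _ = ∫⁻ ξ, Filter.liminf (fun n : ℕ => ENNReal.ofReal (rho (n + 1) (1 / ((n:ℝ) + 1)) ξ)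
          * ‖adj ψ x ξ‖ₑ ^ 2) Filter.atTop := by
        refine lintegral_congr fun ξ => ?_
        refine (Filter.Tendsto.liminf_eq ?_).symm
        refine ENNReal.Tendsto.mul_const (ENNReal.tendsto_ofReal (tendsto_rho ξ)) ?_
        right
        exact ENNReal.pow_ne_top enorm_ne_top
    _ ≤ Filter.liminf (fun n : ℕ => ∫⁻ ξ, ENNReal.ofReal (rho (n + 1) (1 / ((n:ℝ) + 1)) ξ)
          * ‖adj ψ x ξ‖ₑ ^ 2) Filter.atTop :=
        lintegral_liminf_le fun n =>
          ((measurable_rho _ _).ennreal_ofReal).mul (hm.enorm.pow_const 2)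
    _ ≤ _ := by
        refine Filter.liminf_le_of_le (by isBoundedDefault) fun b hb => ?_
        obtain ⟨n, hn⟩ := hb.exists
        exact hn.trans (dual_trunc hψ hx hB (by linarith [(Nat.cast_nonneg n : (0:ℝ) ≤ n)])
          (by positivity))

end

/-- The constant of the linearized Strichartz estimate. -/
def stricConst : ℝ≥0∞ := (72 * decayInt ^ ((8:ℝ)/9)) ^ ((1:ℝ)/2)

lemma stricConst_lt_top : stricConst < ⊤ := by
  unfold stricConst
  refine ENNReal.rpow_lt_top_of_nonneg (by norm_num) (ENNReal.mul_lt_top (by simp) ?_).ne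
  exact ENNReal.rpow_lt_top_of_nonneg (by norm_num) decayInt_lt_top.ne

/-- The weighted `L²` norm `(∫ |F|² / w²)^{1/2}`. -/
def wNorm (F : ℝ × ℝ → ℂ) : ℝ≥0∞ :=
  (∫⁻ ξ, ‖F ξ‖ₑ ^ 2 / ENNReal.ofReal (wsq ξ.1)) ^ ((1:ℝ)/2)

/-- Linearized Strichartz estimate: testing the wave with Fourier data `F`, evaluated at the
moving point `x t`, against `ψ ∈ L^{9/5}`. The shift `τ` does not affect the constant. -/
lemma strichartz {ψ : ℝ → ℂ} {x : ℝ → ℝ × ℝ} {B : ℝ} (hψ : Measurable ψ) (hx : Measurable x)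
    (hB : ∀ t, ‖ψ t‖ ≤ B) {F : ℝ × ℝ → ℂ} (hFm : Measurable F) (hF : Integrable F) (τ : ℝ) :
    ‖∫ t, ψ t * (∫ ξ : ℝ × ℝ, osc (x t) (t - τ) ξ * F ξ) ∂timeMeasure‖ₑ
      ≤ stricConst * (∫⁻ t, ‖ψ t‖ₑ ^ ((9:ℝ)/5) ∂timeMeasure) ^ ((5:ℝ)/9) * wNorm F := by
  have hadj := measurable_adj hψ hx
  set F' : ℝ × ℝ → ℂ := fun ξ => (starRingEnd ℂ) (osc 0 τ ξ) * F ξ with hF'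
  have hosc : Measurable fun ξ => (starRingEnd ℂ) (osc 0 τ ξ) :=
    Complex.continuous_conj.measurable.comp
      (measurable_osc measurable_const measurable_const measurable_id)
  have hF'm : Measurable F' := hosc.mul hFm
  have hn : ∀ ξ, ‖F' ξ‖ = ‖F ξ‖ := fun ξ => by
    simp only [hF', norm_mul, RCLike.norm_conj, norm_osc, one_mul]
  have hsh : ∀ t ξ, osc (x t) (t - τ) ξ * F ξ = osc (x t) t ξ * F' ξ := fun t ξ => by
    simp only [hF', ← mul_assoc, osc_mul_conj, sub_zero]
  have hI : Integrable (fun p : ℝ × (ℝ × ℝ) => ψ p.1 * (osc (x p.1) p.1 p.2 * F' p.2))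
      (timeMeasure.prod volume) := by
    have hdom : Integrable (fun p : ℝ × (ℝ × ℝ) => B * ‖F p.2‖) (timeMeasure.prod volume) :=
      (integrable_const B).mul_prod hF.norm
    refine hdom.mono' ?_ (Filter.Eventually.of_forall fun p => ?_)
    · exact ((hψ.comp measurable_fst).mul ((measurable_osc_comp hx).mul
        (hF'm.comp measurable_snd))).aestronglyMeasurable
    · rw [norm_mul, norm_mul, norm_osc, one_mul, hn]
      gcongr
      exact hB _
  have heq : ∫ t, ψ t * (∫ ξ : ℝ × ℝ, osc (x t) (t - τ) ξ * F ξ) ∂timeMeasure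
      = ∫ ξ, F' ξ * adj ψ x ξ := by
    simp only [hsh, ← integral_const_mul]
    rw [integral_integral_swap hI]
    refine integral_congr_ae (Filter.Eventually.of_forall fun ξ => ?_)
    simp only [adj]
    rw [← integral_const_mul]
    refine integral_congr_ae (Filter.Eventually.of_forall fun t => ?_)
    simp only
    ring
  rw [heq]
  set W : ℝ × ℝ → ℝ≥0∞ := fun ξ => ENNReal.ofReal (wsq ξ.1) with hW
  have hWm : Measurable W := (continuous_wsq.measurable.comp measurable_fst).ennreal_ofReal
  have hW0 : ∀ ξ, W ξ ≠ 0 := fun ξ => by simpa [hW] using wsq_pos ξ.1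
  have hWt : ∀ ξ, W ξ ≠ ⊤ := fun ξ => ENNReal.ofReal_ne_top
  have hsqrt : ∀ a : ℝ≥0∞, (a ^ ((1:ℝ)/2)) ^ (2:ℝ) = a := fun a => by
    rw [← ENNReal.rpow_mul]; norm_num
  calc _ ≤ ∫⁻ ξ, ‖F' ξ * adj ψ x ξ‖ₑ := enorm_integral_le_lintegral_enorm _
    _ = ∫⁻ ξ, ((fun ξ => ‖F ξ‖ₑ / W ξ ^ ((1:ℝ)/2)) *
          (fun ξ => W ξ ^ ((1:ℝ)/2) * ‖adj ψ x ξ‖ₑ)) ξ := by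
        refine lintegral_congr fun ξ => ?_
        rw [enorm_mul, ← ofReal_norm, hn, ofReal_norm]
        have h0 : W ξ ^ ((1:ℝ)/2) ≠ 0 := by simp [ENNReal.rpow_eq_zero_iff, hW0, hWt]
        have ht : W ξ ^ ((1:ℝ)/2) ≠ ⊤ := ENNReal.rpow_ne_top_of_nonneg (by norm_num) (hWt ξ)
        rw [Pi.mul_apply, ← mul_assoc, ENNReal.div_mul_cancel h0 ht]
    _ ≤ (∫⁻ ξ, (‖F ξ‖ₑ / W ξ ^ ((1:ℝ)/2)) ^ (2:ℝ)) ^ (1 / (2:ℝ)) *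
          (∫⁻ ξ, (W ξ ^ ((1:ℝ)/2) * ‖adj ψ x ξ‖ₑ) ^ (2:ℝ)) ^ (1 / (2:ℝ)) :=
        ENNReal.lintegral_mul_le_Lp_mul_Lq _ Real.HolderConjugate.two_two
          (hFm.enorm.div (hWm.pow_const _)).aemeasurable
          ((hWm.pow_const _).mul hadj.enorm).aemeasurable
    _ = wNorm F * (∫⁻ ξ, W ξ * ‖adj ψ x ξ‖ₑ ^ 2) ^ (1 / (2:ℝ)) := by
        unfold wNorm
        congr 2
        · refine lintegral_congr fun ξ => ?_
          rw [ENNReal.div_rpow_of_nonneg _ _ (by norm_num), hsqrt, ENNReal.rpow_two]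
        · refine lintegral_congr fun ξ => ?_
          rw [ENNReal.mul_rpow_of_nonneg _ _ (by norm_num), hsqrt, ENNReal.rpow_two]
    _ ≤ wNorm F * (72 * (decayInt ^ ((8:ℝ)/9) *
          (∫⁻ t, ‖ψ t‖ₑ ^ ((9:ℝ)/5) ∂timeMeasure) ^ ((10:ℝ)/9))) ^ (1 / (2:ℝ)) := by
        gcongr
        exact dual_full hψ hx hB
    _ = _ := by
        rw [← mul_assoc 72, ENNReal.mul_rpow_of_nonneg _ _ (by norm_num), ← ENNReal.rpow_mul]
        unfold stricConst
        norm_num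
        ring

/-! ### Plancherel's theorem on `ℝ × ℝ` -/

section
open scoped FourierTransform SchwartzMap ContDiff

/-- Plancherel's theorem for the integral Fourier transform of an `L¹ ∩ L²` function. -/
lemma eLpNorm_fourier {V : Type*} [NormedAddCommGroup V] [InnerProductSpace ℝ V]
    [FiniteDimensional ℝ V] [MeasurableSpace V] [BorelSpace V] {h : V → ℂ}
    (h1 : Integrable h) (h2 : MemLp h 2) :
    eLpNorm (𝓕 h) 2 volume = eLpNorm h 2 volume := by
  set H : Lp ℂ 2 (volume : Measure V) := h2.toLp h with hH
  have hcont : Continuous (𝓕 h) :=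
    VectorFourier.fourierIntegral_continuous Real.continuous_fourierChar
      (innerSL ℝ).continuous₂ h1
  have hae : ∀ᵐ ξ, (𝓕 H : Lp ℂ 2 (volume : Measure V)) ξ = 𝓕 h ξ := by
    refine ae_eq_of_integral_contDiff_smul_eq
      ((Lp.memLp (𝓕 H)).locallyIntegrable (by norm_num)) hcont.locallyIntegrable ?_
    intro φ hφ hφc
    have hc : HasCompactSupport fun x => (φ x : ℂ) :=
      hφc.comp_left (g := fun r : ℝ => (r : ℂ)) (by simp)
    have hd : ContDiff ℝ ∞ fun x => (φ x : ℂ) := Complex.ofRealCLM.contDiff.comp hφ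
    let Φ : 𝓢(V, ℂ) := hc.toSchwartzMap hd
    have hΦ : ∀ x, Φ x = (φ x : ℂ) := fun x => rfl
    have e := congrArg (fun D => D Φ) (Lp.fourier_toTemperedDistribution_eq H)
    simp only [TemperedDistribution.fourier_apply, Lp.toTemperedDistribution_apply] at e
    have e1 : ∫ x, φ x • (𝓕 H : Lp ℂ 2 (volume : Measure V)) x
        = ∫ x, Φ x • (𝓕 H : Lp ℂ 2 (volume : Measure V)) x := by
      refine integral_congr_ae (Filter.Eventually.of_forall fun x => ?_)
      simp [hΦ]
    have e2 : ∫ x, φ x • 𝓕 h x = ∫ x, Φ x • 𝓕 h x := by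
      refine integral_congr_ae (Filter.Eventually.of_forall fun x => ?_)
      simp [hΦ]
    rw [e1, e2, ← e]
    have e3 : ∫ x, (𝓕 Φ) x • H x = ∫ x, (𝓕 Φ) x • h x := by
      refine integral_congr_ae ?_
      filter_upwards [h2.coeFn_toLp] with x hx
      rw [hH, hx]
    rw [e3]
    have e4 := VectorFourier.integral_fourierIntegral_smul_eq_flip (L := innerₗ V)
      (μ := (volume : Measure V)) (ν := (volume : Measure V)) (f := ⇑Φ) (g := h)
      Real.continuous_fourierChar (innerSL ℝ).continuous₂ Φ.integrable h1
    rw [flip_innerₗ] at e4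
    exact e4
  calc eLpNorm (𝓕 h) 2 volume
      = eLpNorm (𝓕 H : Lp ℂ 2 (volume : Measure V)) 2 volume :=
        (eLpNorm_congr_ae hae).symm
    _ = ENNReal.ofReal ‖(𝓕 H : Lp ℂ 2 (volume : Measure V))‖ := by
        rw [Lp.norm_def, ENNReal.ofReal_toReal (Lp.eLpNorm_ne_top _)]
    _ = ENNReal.ofReal ‖H‖ := by rw [Lp.norm_fourier_eq]
    _ = eLpNorm h 2 volume := by
        rw [hH, Lp.norm_toLp, ENNReal.ofReal_toReal h2.eLpNorm_ne_top]

end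

section
open scoped FourierTransform SchwartzMap

/-- The Euclidean plane: `ℝ × ℝ` with the `ℓ²` norm, where Mathlib's Fourier transform lives. -/
abbrev Pl := WithLp 2 (ℝ × ℝ)

lemma FT_eq (f : ℝ × ℝ → ℂ) (ξ : ℝ × ℝ) :
    FT f ξ = 𝓕 (fun v : Pl => f (WithLp.ofLp v)) (WithLp.toLp 2 ξ) := by
  rw [Real.fourier_eq', ← (WithLp.volume_preserving_toLp ℝ ℝ).integral_comp
    (WithLp.homeomorphProd 2 ℝ ℝ).symm.measurableEmbedding]
  unfold FT
  refine integral_congr_ae (Filter.Eventually.of_forall fun x => ?_)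
  simp only [WithLp.prod_inner_apply, smul_eq_mul, RCLike.inner_apply, conj_trivial]
  congr 3
  push_cast
  ring

lemma FTinv_eq (f : ℝ × ℝ → ℂ) (x : ℝ × ℝ) :
    FTinv f x = 𝓕 (fun v : Pl => f (WithLp.ofLp v)) (-(WithLp.toLp 2 x)) := by
  rw [← WithLp.toLp_neg, ← FT_eq]
  unfold FT FTinv
  refine integral_congr_ae (Filter.Eventually.of_forall fun ξ => ?_)
  simp only [Prod.fst_neg, Prod.snd_neg]
  congr 3
  push_cast
  ring

/-- Plancherel's theorem for `FT`. -/
lemma eLpNorm_FT {f : ℝ × ℝ → ℂ} (h1 : Integrable f) (h2 : MemLp f 2) :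
    eLpNorm (FT f) 2 volume = eLpNorm f 2 volume := by
  have ho := WithLp.volume_preserving_ofLp ℝ ℝ
  have ht := WithLp.volume_preserving_toLp ℝ ℝ
  have hme := (WithLp.homeomorphProd 2 ℝ ℝ).symm.measurableEmbedding
  have g1 : Integrable (fun v : Pl => f (WithLp.ofLp v)) := ho.integrable_comp_of_integrable h1
  have g2 : MemLp (fun v : Pl => f (WithLp.ofLp v)) 2 := h2.comp_measurePreserving ho
  have e := eLpNorm_fourier g1 g2
  have e2 : eLpNorm (fun v : Pl => f (WithLp.ofLp v)) 2 volume = eLpNorm f 2 volume :=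
    eLpNorm_comp_measurePreserving h1.aestronglyMeasurable ho
  have hcont : Continuous (𝓕 fun v : Pl => f (WithLp.ofLp v)) :=
    VectorFourier.fourierIntegral_continuous Real.continuous_fourierChar
      (innerSL ℝ).continuous₂ g1
  have e3 := eLpNorm_comp_measurePreserving (p := 2)
    (hcont.aestronglyMeasurable (μ := (volume : Measure Pl))) ht
  rw [← e2, ← e, ← e3]
  congr 1
  funext ξ
  exact FT_eq f ξ

/-- Plancherel's theorem for `FTinv`, which is `FT` followed by a reflection. -/
lemma eLpNorm_FTinv {f : ℝ × ℝ → ℂ} (h1 : Integrable f) (h2 : MemLp f 2) :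
    eLpNorm (FTinv f) 2 volume = eLpNorm f 2 volume := by
  have hc : Continuous (FT f) := by
    have ho := WithLp.volume_preserving_ofLp ℝ ℝ
    have g1 : Integrable (fun v : Pl => f (WithLp.ofLp v)) := ho.integrable_comp_of_integrable h1
    have hcont : Continuous (𝓕 fun v : Pl => f (WithLp.ofLp v)) :=
      VectorFourier.fourierIntegral_continuous Real.continuous_fourierChar
        (innerSL ℝ).continuous₂ g1
    have : FT f = fun ξ => 𝓕 (fun v : Pl => f (WithLp.ofLp v)) (WithLp.toLp 2 ξ) := by
      funext ξ; exact FT_eq f ξ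
    rw [this]
    exact hcont.comp (WithLp.prod_continuous_toLp 2 ℝ ℝ)
  rw [← eLpNorm_FT h1 h2, ← eLpNorm_comp_measurePreserving (p := 2)
    (hc.aestronglyMeasurable (μ := volume)) (Measure.measurePreserving_neg (volume : Measure (ℝ × ℝ)))]
  congr 1
  funext x
  simp only [Function.comp]
  rw [FTinv_eq, FT_eq, WithLp.toLp_neg]

/-- The Fourier transform `FT` as a continuous linear map of the Schwartz space on `ℝ × ℝ`. -/
def SF : 𝓢(ℝ × ℝ, ℂ) →L[ℂ] 𝓢(ℝ × ℝ, ℂ) :=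
  (SchwartzMap.compCLMOfContinuousLinearEquiv ℂ (WithLp.prodContinuousLinearEquiv 2 ℝ ℝ ℝ).symm) ∘L
    (SchwartzMap.fourierTransformCLM ℂ) ∘L
    (SchwartzMap.compCLMOfContinuousLinearEquiv ℂ (WithLp.prodContinuousLinearEquiv 2 ℝ ℝ ℝ))

lemma FT_schwartz (g : 𝓢(ℝ × ℝ, ℂ)) : FT ⇑g = ⇑(SF g) := by
  funext ξ
  rw [FT_eq]
  rfl

lemma integrable_rpow_mul_schwartz {r : ℝ} (hr : -1 < r) (hr0 : r ≤ 0) (φ : 𝓢(ℝ × ℝ, ℂ)) :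
    Integrable fun ξ : ℝ × ℝ => ((|ξ.1| ^ r : ℝ) : ℂ) * φ ξ := by
  obtain ⟨C0, hC0, h0⟩ := φ.decay 0 0
  obtain ⟨C2, hC2, h2⟩ := φ.decay 2 0
  simp only [norm_iteratedFDeriv_zero, pow_zero, one_mul] at h0 h2
  have hdec : ∀ ξ : ℝ × ℝ, ‖φ ξ‖ ≤ (C0 + C2) * (1 + ξ.2 ^ 2)⁻¹ := by
    intro ξ
    rw [← div_eq_mul_inv, le_div_iff₀ (by positivity)]
    have h3 : ξ.2 ^ 2 ≤ ‖ξ‖ ^ 2 := by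
      rw [← sq_abs]
      gcongr
      exact norm_snd_le ξ
    nlinarith [h0 ξ, h2 ξ, norm_nonneg (φ ξ), mul_le_mul_of_nonneg_right h3 (norm_nonneg (φ ξ))]
  have hd1 : Integrable fun ξ : ℝ × ℝ =>
      (Set.Icc (-1:ℝ) 1).indicator (fun a => |a| ^ r) ξ.1 * ((C0 + C2) * (1 + ξ.2 ^ 2)⁻¹) := by
    refine Integrable.mul_prod (f := (Set.Icc (-1:ℝ) 1).indicator (fun a => |a| ^ r))
      (g := fun b => (C0 + C2) * (1 + b ^ 2)⁻¹) ?_ ?_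
    · exact (integrable_indicator_iff measurableSet_Icc).2
        (integrableOn_abs_rpow hr (by norm_num))
    · exact integrable_inv_one_add_sq.const_mul _
  refine (hd1.add φ.integrable.norm).mono' ?_ (Filter.Eventually.of_forall fun ξ => ?_)
  · refine Measurable.aestronglyMeasurable (Measurable.mul ?_ φ.continuous.measurable)
    exact Complex.measurable_ofReal.comp ((measurable_fst.abs).pow_const r)
  · have hp : 0 ≤ |ξ.1| ^ r := Real.rpow_nonneg (abs_nonneg _) _
    rw [norm_mul, Complex.norm_real, Real.norm_of_nonneg hp]
    simp only [Pi.add_apply]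
    by_cases h : ξ.1 ∈ Set.Icc (-1:ℝ) 1
    · rw [Set.indicator_of_mem h]
      have := mul_le_mul_of_nonneg_left (hdec ξ) hp
      linarith [norm_nonneg (φ ξ)]
    · rw [Set.indicator_of_notMem h, zero_mul, zero_add]
      have h1 : 1 ≤ |ξ.1| := by
        by_contra hlt
        exact h (abs_le.1 (not_le.1 hlt).le)
      calc _ ≤ 1 * ‖φ ξ‖ := by
            gcongr; exact Real.rpow_le_one_of_one_le_of_nonpos h1 hr0
        _ = _ := one_mul _

/-- For `r > -1/2` the singular multiplier `|ξ₁| ^ r` maps Schwartz functions to `L²`, so that `Dx1 r` of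
a Schwartz function obeys Plancherel. -/
lemma memLp_rpow_mul_schwartz {r : ℝ} (hr : -1 < 2 * r) (hr0 : r ≤ 0) (φ : 𝓢(ℝ × ℝ, ℂ)) :
    MemLp (fun ξ : ℝ × ℝ => ((|ξ.1| ^ r : ℝ) : ℂ) * φ ξ) 2 := by
  have hm : Measurable fun ξ : ℝ × ℝ => ((|ξ.1| ^ r : ℝ) : ℂ) * φ ξ :=
    (Complex.measurable_ofReal.comp ((measurable_fst.abs).pow_const r)).mul
      φ.continuous.measurable
  rw [memLp_two_iff_integrable_sq_norm hm.aestronglyMeasurable]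
  obtain ⟨C0, hC0, h0⟩ := φ.decay 0 0
  simp only [norm_iteratedFDeriv_zero, pow_zero, one_mul] at h0
  refine ((integrable_rpow_mul_schwartz hr (by linarith) φ).norm.const_mul C0).mono'
    (hm.norm.pow_const 2).aestronglyMeasurable (Filter.Eventually.of_forall fun ξ => ?_)
  have hp : 0 ≤ |ξ.1| ^ r := Real.rpow_nonneg (abs_nonneg _) _
  have hp2 : 0 ≤ |ξ.1| ^ (2 * r) := Real.rpow_nonneg (abs_nonneg _) _
  have hle : (|ξ.1| ^ r) ^ 2 = |ξ.1| ^ (2 * r) := by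
    rw [mul_comm, Real.rpow_mul (abs_nonneg _), Real.rpow_two]
  rw [Real.norm_of_nonneg (sq_nonneg _), norm_mul, norm_mul, Complex.norm_real, Complex.norm_real,
    Real.norm_of_nonneg hp, Real.norm_of_nonneg hp2, mul_pow, hle]
  nlinarith [mul_nonneg hp2 (norm_nonneg (φ ξ)), h0 ξ]

lemma eLpNorm_two_eq (f : ℝ × ℝ → ℂ) :
    eLpNorm f 2 volume = (∫⁻ ξ, ‖f ξ‖ₑ ^ 2) ^ ((1:ℝ)/2) := by
  rw [eLpNorm_eq_lintegral_rpow_enorm_toReal (by norm_num) (by norm_num)]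
  simp

/-- The weight satisfies `w ≥ 1`. -/
lemma wNorm_le_L2 (g : 𝓢(ℝ × ℝ, ℂ)) : wNorm (SF g) ≤ eLpNorm (⇑g) 2 volume := by
  rw [← eLpNorm_FT g.integrable (g.memLp 2), FT_schwartz, eLpNorm_two_eq]
  unfold wNorm
  gcongr with ξ
  refine ENNReal.div_le_of_le_mul ?_
  have : 1 ≤ ENNReal.ofReal (wsq ξ.1) := by
    rw [← ENNReal.ofReal_one]; exact ENNReal.ofReal_le_ofReal (one_le_wsq _)
  calc _ = ‖(SF g) ξ‖ₑ ^ 2 * 1 := (mul_one _).symm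
    _ ≤ _ := by gcongr

/-- The weight satisfies `w ≥ |ξ₁| ^ (2/9)`. -/
lemma wNorm_le_Dx1 (g : 𝓢(ℝ × ℝ, ℂ)) :
    wNorm (SF g) ≤ eLpNorm (Dx1 (-(2:ℝ)/9) ⇑g) 2 volume := by
  unfold Dx1
  rw [FT_schwartz, eLpNorm_FTinv
    (integrable_rpow_mul_schwartz (by norm_num) (by norm_num) _)
    (memLp_rpow_mul_schwartz (by norm_num) (by norm_num) _), eLpNorm_two_eq]
  unfold wNorm
  refine ENNReal.rpow_le_rpow (lintegral_mono_ae ?_) (by norm_num)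
  have hne : ∀ᵐ ξ : ℝ × ℝ, ξ.1 ≠ 0 := by
    have : ∀ᵐ a : ℝ, a ≠ 0 := by simp [ae_iff, measure_singleton]
    exact Measure.quasiMeasurePreserving_fst.ae this
  filter_upwards [hne] with ξ hξ
  have hp : 0 < |ξ.1| := abs_pos.2 hξ
  have hkey : 1 ≤ (|ξ.1| ^ (-(2:ℝ)/9)) ^ 2 * wsq ξ.1 := by
    rw [← Real.rpow_natCast, ← Real.rpow_mul hp.le]
    rcases le_total |ξ.1| 1 with h | h
    · have h1 : 1 ≤ |ξ.1| ^ (-(2:ℝ)/9 * (2:ℕ)) :=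
        Real.one_le_rpow_of_pos_of_le_one_of_nonpos hp h (by norm_num)
      nlinarith [one_le_wsq ξ.1]
    · have h1 : |ξ.1| ^ (1 / 2 : ℝ) ≤ wsq ξ.1 := le_max_right _ _
      calc (1:ℝ) ≤ |ξ.1| ^ (1/18 : ℝ) := Real.one_le_rpow h (by norm_num)
        _ = |ξ.1| ^ (-(2:ℝ)/9 * (2:ℕ)) * |ξ.1| ^ (1 / 2 : ℝ) := by
            rw [← Real.rpow_add hp]; norm_num
        _ ≤ _ := by gcongr
  refine ENNReal.div_le_of_le_mul ?_
  rw [enorm_mul, mul_pow, ← ofReal_norm (((|ξ.1| ^ (-(2:ℝ)/9) : ℝ)) : ℂ), Complex.norm_real,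
    Real.norm_of_nonneg (Real.rpow_nonneg hp.le _), ← ENNReal.ofReal_pow (Real.rpow_nonneg hp.le _),
    mul_right_comm, ← ENNReal.ofReal_mul (by positivity)]
  calc _ = 1 * ‖(SF g) ξ‖ₑ ^ 2 := (one_mul _).symm
    _ ≤ _ := by
      gcongr
      rw [← ENNReal.ofReal_one]; exact ENNReal.ofReal_le_ofReal hkey

end

/-! ### The retarded estimate -/

/-- The free wave `U(t - τ)` applied to the datum with Fourier transform `Φ τ`. -/
def wave (Φ : ℝ → ℝ × ℝ → ℂ) (t τ : ℝ) (x : ℝ × ℝ) : ℂ := ∫ ξ, osc x (t - τ) ξ * Φ τ ξ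

/-- The Duhamel integrand, cut off to `τ ≤ t`. -/
def retWave (Φ : ℝ → ℝ × ℝ → ℂ) (t τ : ℝ) (x : ℝ × ℝ) : ℂ :=
  (Set.Iic t).indicator (fun τ => wave Φ t τ x) τ

/-- The Duhamel term in terms of the Fourier transform `Φ` of the source. -/
def duhF (Φ : ℝ → ℝ × ℝ → ℂ) (t : ℝ) (x : ℝ × ℝ) : ℂ := ∫ τ, retWave Φ t τ x ∂timeMeasure

section
variable {Φ : ℝ → ℝ × ℝ → ℂ} {M : ℝ}

lemma measurable_wave (hm : Measurable fun p : ℝ × (ℝ × ℝ) => Φ p.1 p.2) :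
    Measurable fun p : (ℝ × ℝ) × (ℝ × ℝ) => wave Φ p.1.1 p.1.2 p.2 := by
  have h : Measurable fun q : ((ℝ × ℝ) × (ℝ × ℝ)) × (ℝ × ℝ) =>
      osc q.1.2 (q.1.1.1 - q.1.1.2) q.2 * Φ q.1.1.2 q.2 := by
    have f1 : Measurable fun q : ((ℝ × ℝ) × (ℝ × ℝ)) × (ℝ × ℝ) => q.1.1 :=
      measurable_fst.comp measurable_fst
    have f11 := measurable_fst.comp f1
    have f12 := measurable_snd.comp f1
    have f2 : Measurable fun q : ((ℝ × ℝ) × (ℝ × ℝ)) × (ℝ × ℝ) => q.1.2 :=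
      measurable_snd.comp measurable_fst
    refine Measurable.mul (measurable_osc f2 (f11.sub f12) measurable_snd) ?_
    have := hm.comp (f12.prodMk measurable_snd)
    simpa only [Function.comp_def] using this
  exact (h.stronglyMeasurable.integral_prod_right' (ν := volume)).measurable

lemma measurable_retWave (hm : Measurable fun p : ℝ × (ℝ × ℝ) => Φ p.1 p.2) :
    Measurable fun p : (ℝ × ℝ) × (ℝ × ℝ) => retWave Φ p.1.1 p.1.2 p.2 := by
  have hs : MeasurableSet {p : (ℝ × ℝ) × (ℝ × ℝ) | p.1.2 ≤ p.1.1} :=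
    measurableSet_le (measurable_snd.comp measurable_fst) (measurable_fst.comp measurable_fst)
  have h := (measurable_wave hm).indicator hs
  refine (congrArg Measurable ?_).mp h
  funext p
  simp only [retWave, Set.indicator, Set.mem_ofPred_eq, Set.mem_Iic]

lemma measurable_duhF (hm : Measurable fun p : ℝ × (ℝ × ℝ) => Φ p.1 p.2) :
    Measurable fun p : ℝ × (ℝ × ℝ) => duhF Φ p.1 p.2 := by
  have h : Measurable fun q : (ℝ × (ℝ × ℝ)) × ℝ => retWave Φ q.1.1 q.2 q.1.2 := by
    have f1 : Measurable fun q : (ℝ × (ℝ × ℝ)) × ℝ => q.1.1 := measurable_fst.comp measurable_fst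
    have f2 : Measurable fun q : (ℝ × (ℝ × ℝ)) × ℝ => q.1.2 := measurable_snd.comp measurable_fst
    have := (measurable_retWave hm).comp ((f1.prodMk measurable_snd).prodMk f2)
    simpa only [Function.comp_def] using this
  exact (h.stronglyMeasurable.integral_prod_right' (ν := timeMeasure)).measurable

lemma norm_wave_le (hM : ∀ τ, ∫ ξ, ‖Φ τ ξ‖ ≤ M) (t τ : ℝ) (x : ℝ × ℝ) : ‖wave Φ t τ x‖ ≤ M := by
  refine (norm_integral_le_integral_norm _).trans ?_
  simpa only [norm_mul, norm_osc, one_mul] using hM τ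

lemma norm_retWave_le (hM : ∀ τ, ∫ ξ, ‖Φ τ ξ‖ ≤ M) (t τ : ℝ) (x : ℝ × ℝ) :
    ‖retWave Φ t τ x‖ ≤ M :=
  (norm_indicator_le_norm_self (fun τ => wave Φ t τ x) τ).trans (norm_wave_le hM t τ x)

lemma norm_duhF_le (hM : ∀ τ, ∫ ξ, ‖Φ τ ξ‖ ≤ M) (t : ℝ) (x : ℝ × ℝ) : ‖duhF Φ t x‖ ≤ M := by
  have := norm_integral_le_of_norm_le_const (μ := timeMeasure)
    (Filter.Eventually.of_forall fun τ => norm_retWave_le hM t τ x)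
  simpa [duhF] using this

lemma continuous_wave (hi : ∀ τ, Integrable (Φ τ)) (t τ : ℝ) : Continuous (wave Φ t τ) := by
  refine continuous_of_dominated (bound := fun ξ => ‖Φ τ ξ‖) (fun x => ?_) (fun x => ?_)
    (hi τ).norm (Filter.Eventually.of_forall fun ξ => ?_)
  · exact (measurable_osc measurable_const measurable_const measurable_id).aestronglyMeasurable.mul
      (hi τ).aestronglyMeasurable
  · exact Filter.Eventually.of_forall fun ξ => by rw [norm_mul, norm_osc, one_mul]
  · refine Continuous.mul ?_ continuous_const
    have h : Continuous fun x : ℝ × ℝ => (x, t - τ, ξ) := by fun_prop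
    have := continuous_osc.comp h
    simpa only [Function.comp_def] using this

lemma continuous_duhF (hm : Measurable fun p : ℝ × (ℝ × ℝ) => Φ p.1 p.2)
    (hi : ∀ τ, Integrable (Φ τ)) (hM : ∀ τ, ∫ ξ, ‖Φ τ ξ‖ ≤ M) (t : ℝ) :
    Continuous (duhF Φ t) := by
  refine continuous_of_dominated (bound := fun _ => M) (fun x => ?_)
    (fun x => Filter.Eventually.of_forall fun τ => norm_retWave_le hM t τ x)
    (integrable_const M) (Filter.Eventually.of_forall fun τ => ?_)
  · have h : Measurable fun τ : ℝ => ((t, τ), x) := by fun_prop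
    have := (measurable_retWave hm).comp h
    exact (by simpa only [Function.comp_def] using this : Measurable _).aestronglyMeasurable
  · unfold retWave
    by_cases h : τ ∈ Set.Iic t
    · simp only [Set.indicator_of_mem h]; exact continuous_wave hi t τ
    · simp only [Set.indicator_of_notMem h]; exact continuous_const

/-- A measurable choice of near-maximum points: linearization of the `L^∞` norm in space. -/
lemma exists_near_max (hm : Measurable fun p : ℝ × (ℝ × ℝ) => Φ p.1 p.2)
    (hi : ∀ τ, Integrable (Φ τ)) (hM : ∀ τ, ∫ ξ, ‖Φ τ ξ‖ ≤ M) :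
    ∃ x : ℝ → ℝ × ℝ, Measurable x ∧
      ∀ t, eLpNorm (duhF Φ t) ⊤ volume ≤ 2 * ‖duhF Φ t (x t)‖ₑ := by
  classical
  set q := TopologicalSpace.denseSeq (ℝ × ℝ) with hq
  have hq_dense : DenseRange q := TopologicalSpace.denseRange_denseSeq _
  set S : ℝ → ℝ≥0∞ := fun t => ⨆ n, ‖duhF Φ t (q n)‖ₑ with hS
  have hmn : ∀ n, Measurable fun t => ‖duhF Φ t (q n)‖ₑ := fun n => by
    have h : Measurable fun t : ℝ => (t, q n) := by fun_prop
    have := (measurable_duhF hm).comp h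
    exact (by simpa only [Function.comp_def] using this : Measurable fun t => duhF Φ t (q n)).enorm
  have hSm : Measurable S := Measurable.iSup hmn
  have hSle : ∀ t x, ‖duhF Φ t x‖ₑ ≤ S t := fun t => by
    have hcl : IsClosed {x | ‖duhF Φ t x‖ₑ ≤ S t} :=
      isClosed_le (continuous_duhF hm hi hM t).enorm continuous_const
    intro x
    refine hq_dense.induction_on (p := fun x => ‖duhF Φ t x‖ₑ ≤ S t) x hcl fun n => ?_
    exact le_iSup (fun n => ‖duhF Φ t (q n)‖ₑ) n
  have hSfin : ∀ t, S t ≠ ⊤ := fun t => by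
    refine ne_top_of_le_ne_top (ENNReal.ofReal_ne_top (r := M)) (iSup_le fun n => ?_)
    rw [← ofReal_norm]
    exact ENNReal.ofReal_le_ofReal (norm_duhF_le hM t _)
  have hex : ∀ t, ∃ n, S t ≤ 2 * ‖duhF Φ t (q n)‖ₑ := fun t => by
    rcases eq_or_ne (S t) 0 with h0 | h0
    · exact ⟨0, by rw [h0]; exact zero_le⟩
    · obtain ⟨n, hn⟩ := lt_iSup_iff.1 (ENNReal.half_lt_self h0 (hSfin t))
      exact ⟨n, by rw [← ENNReal.div_le_iff' (by norm_num) (by norm_num)]; exact hn.le⟩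
  refine ⟨fun t => q (Nat.find (hex t)), ?_, fun t => ?_⟩
  · exact (measurable_from_nat (f := q)).comp
      (measurable_find hex fun k => measurableSet_le hSm ((hmn k).const_mul 2))
  · refine le_trans ?_ (Nat.find_spec (hex t))
    rw [eLpNorm_exponent_top]
    exact eLpNormEssSup_le_of_ae_enorm_bound (Filter.Eventually.of_forall (hSle t))

/-- The retarded estimate along a measurable curve `x t`. After exchanging the two time integrals the
cutoff `τ ≤ t` truncates the test function `ψ`, which only decreases its `L^{9/5}` norm, so the
non-retarded estimate `strichartz` applies for each fixed `τ`. -/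
lemma retarded_along (hm : Measurable fun p : ℝ × (ℝ × ℝ) => Φ p.1 p.2)
    (hi : ∀ τ, Integrable (Φ τ)) (hM : ∀ τ, ∫ ξ, ‖Φ τ ξ‖ ≤ M)
    {x : ℝ → ℝ × ℝ} (hx : Measurable x) {T : ℝ} (hT1 : T ≤ 1) :
    (∫⁻ t in Set.Icc (0:ℝ) T, ‖duhF Φ t (x t)‖ₑ ^ ((9:ℝ)/4)) ^ ((4:ℝ)/9)
      ≤ stricConst * ∫⁻ τ in Set.Icc (0:ℝ) T, wNorm (Φ τ) := by
  set b : ℝ → ℂ := fun t => duhF Φ t (x t) with hb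
  have hbm : Measurable b := by
    have := (measurable_duhF hm).comp (measurable_id.prodMk hx)
    simpa only [Function.comp_def, id] using this
  have hbM : ∀ t, ‖b t‖ ≤ M := fun t => norm_duhF_le hM t _
  have hM0 : 0 ≤ M := (norm_nonneg _).trans (hbM 0)
  set J := ∫⁻ t in Set.Icc (0:ℝ) T, ‖b t‖ₑ ^ ((9:ℝ)/4) with hJ
  have hsub : Set.Icc (0:ℝ) T ⊆ Set.Icc 0 1 := Set.Icc_subset_Icc_right hT1
  have hres : timeMeasure.restrict (Set.Icc (0:ℝ) T) = volume.restrict (Set.Icc (0:ℝ) T) :=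
    Measure.restrict_restrict_of_subset hsub
  -- the test function dual to `b`
  set ψ : ℝ → ℂ := (Set.Icc (0:ℝ) T).indicator
    (fun t => (starRingEnd ℂ) (b t) * ((‖b t‖ ^ ((1:ℝ)/4) : ℝ) : ℂ)) with hψ
  have hψm : Measurable ψ := by
    refine Measurable.indicator ?_ measurableSet_Icc
    exact (Complex.continuous_conj.measurable.comp hbm).mul
      (Complex.measurable_ofReal.comp (hbm.norm.pow_const _))
  have hψn : ∀ t ∈ Set.Icc (0:ℝ) T, ‖ψ t‖ = ‖b t‖ ^ ((5:ℝ)/4) := fun t ht => by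
    rw [hψ, Set.indicator_of_mem ht, norm_mul, RCLike.norm_conj, Complex.norm_real,
      Real.norm_of_nonneg (Real.rpow_nonneg (norm_nonneg _) _)]
    nth_rewrite 1 [← Real.rpow_one ‖b t‖]
    rw [← Real.rpow_add_of_nonneg (norm_nonneg _) (by norm_num) (by norm_num)]
    norm_num
  have hψB : ∀ t, ‖ψ t‖ ≤ M ^ ((5:ℝ)/4) := fun t => by
    by_cases ht : t ∈ Set.Icc (0:ℝ) T
    · rw [hψn t ht]
      exact Real.rpow_le_rpow (norm_nonneg _) (hbM t) (by norm_num)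
    · rw [hψ, Set.indicator_of_notMem ht, norm_zero]
      exact Real.rpow_nonneg hM0 _
  have hψJ : ∫⁻ t, ‖ψ t‖ₑ ^ ((9:ℝ)/5) ∂timeMeasure = J := by
    rw [hJ, ← hres, ← lintegral_indicator (μ := timeMeasure)
      (measurableSet_Icc (a := (0:ℝ)) (b := T))]
    refine lintegral_congr fun t => ?_
    by_cases ht : t ∈ Set.Icc (0:ℝ) T
    · rw [Set.indicator_of_mem ht, ← ofReal_norm (ψ t), hψn t ht,
        ← ENNReal.ofReal_rpow_of_nonneg (norm_nonneg _) (by norm_num), ofReal_norm,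
        ← ENNReal.rpow_mul]
      norm_num
    · rw [Set.indicator_of_notMem ht, hψ, Set.indicator_of_notMem ht]
      simp
  have hJfin : J ≠ ⊤ := by
    have : J ≤ ∫⁻ t in Set.Icc (0:ℝ) T, ENNReal.ofReal (M ^ ((9:ℝ)/4)) := by
      refine lintegral_mono fun t => ?_
      rw [← ofReal_norm, ENNReal.ofReal_rpow_of_nonneg (norm_nonneg _) (by norm_num)]
      exact ENNReal.ofReal_le_ofReal (Real.rpow_le_rpow (norm_nonneg _) (hbM t) (by norm_num))
    refine ne_top_of_le_ne_top ?_ this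
    rw [setLIntegral_const]
    exact ENNReal.mul_ne_top ENNReal.ofReal_ne_top (by simp)
  -- duality: `J` is the pairing of `ψ` with `b`
  have hpair : J = ‖∫ t, ψ t * b t ∂timeMeasure‖ₑ := by
    have e : ∀ t, ψ t * b t
        = (((Set.Icc (0:ℝ) T).indicator (fun t => ‖b t‖ ^ ((9:ℝ)/4)) t : ℝ) : ℂ) := fun t => by
      by_cases ht : t ∈ Set.Icc (0:ℝ) T
      · rw [hψ, Set.indicator_of_mem ht, Set.indicator_of_mem ht, mul_right_comm, mul_comm _ (b t),
          Complex.mul_conj, Complex.normSq_eq_norm_sq, ← Complex.ofReal_mul, ← Real.rpow_two,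
          ← Real.rpow_add_of_nonneg (norm_nonneg _) (by norm_num) (by norm_num)]
        norm_num
      · rw [hψ, Set.indicator_of_notMem ht, Set.indicator_of_notMem ht]
        simp
    have h0 : ∀ t, 0 ≤ (Set.Icc (0:ℝ) T).indicator (fun t => ‖b t‖ ^ ((9:ℝ)/4)) t := fun t =>
      Set.indicator_nonneg (fun t _ => Real.rpow_nonneg (norm_nonneg _) _) t
    have hInt : Integrable ((Set.Icc (0:ℝ) T).indicator (fun t => ‖b t‖ ^ ((9:ℝ)/4)))
        timeMeasure := by
      refine (integrable_const (M ^ ((9:ℝ)/4))).mono'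
        ((hbm.norm.pow_const _).indicator measurableSet_Icc).aestronglyMeasurable
        (Filter.Eventually.of_forall fun t => ?_)
      refine (norm_indicator_le_norm_self _ t).trans ?_
      rw [Real.norm_of_nonneg (Real.rpow_nonneg (norm_nonneg _) _)]
      exact Real.rpow_le_rpow (norm_nonneg _) (hbM t) (by norm_num)
    simp only [e]
    rw [integral_complex_ofReal, ← ofReal_norm, Complex.norm_real,
      Real.norm_of_nonneg (integral_nonneg h0),
      ofReal_integral_eq_lintegral_ofReal hInt (Filter.Eventually.of_forall h0),
      hJ, ← hres, ← lintegral_indicator measurableSet_Icc]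
    refine lintegral_congr fun t => ?_
    by_cases ht : t ∈ Set.Icc (0:ℝ) T
    · rw [Set.indicator_of_mem ht, Set.indicator_of_mem ht,
        ← ENNReal.ofReal_rpow_of_nonneg (norm_nonneg _) (by norm_num), ofReal_norm]
    · rw [Set.indicator_of_notMem ht, Set.indicator_of_notMem ht, ENNReal.ofReal_zero]
  -- exchange the order of the two time integrals
  have hswap : ∫ t, ψ t * b t ∂timeMeasure
      = ∫ τ, ∫ t, (Set.Ici τ).indicator ψ t * wave Φ t τ (x t) ∂timeMeasure ∂timeMeasure := by
    have hI : Integrable (Function.uncurry fun t τ => ψ t * retWave Φ t τ (x t))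
        (timeMeasure.prod timeMeasure) := by
      refine (integrable_const (M ^ ((5:ℝ)/4) * M)).mono' ?_ (Filter.Eventually.of_forall fun p => ?_)
      · have h1 : Measurable fun p : ℝ × ℝ => retWave Φ p.1 p.2 (x p.1) := by
          have := (measurable_retWave hm).comp
            (measurable_id.prodMk (hx.comp (measurable_fst (α := ℝ) (β := ℝ))))
          simpa only [Function.comp_def, id] using this
        exact ((hψm.comp measurable_fst).mul h1).aestronglyMeasurable
      · simp only [Function.uncurry, norm_mul]
        gcongr
        · exact hψB _
        · exact norm_retWave_le hM _ _ _
    have e1 : ∀ t, ψ t * b t = ∫ τ, ψ t * retWave Φ t τ (x t) ∂timeMeasure := fun t =>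
      (integral_const_mul _ _).symm
    simp only [e1]
    rw [integral_integral_swap hI]
    congr 1; funext τ
    congr 1; funext t
    unfold retWave
    by_cases h : τ ≤ t
    · rw [Set.indicator_of_mem (by exact h), Set.indicator_of_mem (by exact h)]
    · rw [Set.indicator_of_notMem (by exact h), Set.indicator_of_notMem (by exact h)]
      simp
  have hτ : ∀ τ, ‖∫ t, (Set.Ici τ).indicator ψ t * wave Φ t τ (x t) ∂timeMeasure‖ₑ
      ≤ (Set.Iic T).indicator (fun τ => stricConst * J ^ ((5:ℝ)/9) * wNorm (Φ τ)) τ := fun τ => by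
    by_cases h : τ ≤ T
    · rw [Set.indicator_of_mem (by exact h)]
      have hΦm : Measurable (Φ τ) := by
        have := hm.comp (measurable_const.prodMk measurable_id : Measurable fun ξ : ℝ × ℝ => (τ, ξ))
        simpa only [Function.comp_def] using this
      refine (strichartz (hψm.indicator measurableSet_Ici) hx
        (fun t => (norm_indicator_le_norm_self ψ t).trans (hψB t)) hΦm (hi τ) τ).trans ?_
      gcongr
      rw [← hψJ]
      gcongr with t
      exact enorm_indicator_le_enorm_self ψ t
    · have hz : ∀ t, (Set.Ici τ).indicator ψ t * wave Φ t τ (x t) = 0 := fun t => by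
        have : (Set.Ici τ).indicator ψ t = 0 := by
          by_cases ht : t ∈ Set.Ici τ
          · rw [Set.indicator_of_mem ht, hψ, Set.indicator_of_notMem]
            intro ht'
            exact h (le_trans ht ht'.2)
          · exact Set.indicator_of_notMem ht _
        rw [this, zero_mul]
      simp [hz]
  set R := ∫⁻ τ in Set.Icc (0:ℝ) T, wNorm (Φ τ) with hR
  have hCJ : stricConst * J ^ ((5:ℝ)/9) ≠ ⊤ :=
    ENNReal.mul_ne_top stricConst_lt_top.ne (ENNReal.rpow_ne_top_of_nonneg (by norm_num) hJfin)
  have hmain : J ≤ stricConst * J ^ ((5:ℝ)/9) * R := by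
    calc J = ‖∫ t, ψ t * b t ∂timeMeasure‖ₑ := hpair
      _ ≤ ∫⁻ τ, ‖∫ t, (Set.Ici τ).indicator ψ t * wave Φ t τ (x t) ∂timeMeasure‖ₑ
            ∂timeMeasure := by
          rw [hswap]; exact enorm_integral_le_lintegral_enorm _
      _ ≤ ∫⁻ τ, (Set.Iic T).indicator (fun τ => stricConst * J ^ ((5:ℝ)/9) * wNorm (Φ τ)) τ
            ∂timeMeasure := lintegral_mono hτ
      _ = ∫⁻ τ in Set.Icc (0:ℝ) T, stricConst * J ^ ((5:ℝ)/9) * wNorm (Φ τ) := by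
          rw [lintegral_indicator measurableSet_Iic, Measure.restrict_restrict measurableSet_Iic]
          congr 2
          ext s
          simp only [Set.mem_inter_iff, Set.mem_Iic, Set.mem_Icc]
          constructor
          · rintro ⟨h1, h2, -⟩; exact ⟨h2, h1⟩
          · rintro ⟨h1, h2⟩; exact ⟨h2, h1, h2.trans hT1⟩
      _ = _ := lintegral_const_mul' _ _ hCJ
  rcases eq_or_ne J 0 with h0 | h0
  · rw [h0, ENNReal.zero_rpow_of_pos (by norm_num)]; exact zero_le
  have hJ5 : J ^ ((5:ℝ)/9) ≠ 0 := by simp [ENNReal.rpow_eq_zero_iff, h0, hJfin]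
  have hJ5t : J ^ ((5:ℝ)/9) ≠ ⊤ := ENNReal.rpow_ne_top_of_nonneg (by norm_num) hJfin
  rw [← ENNReal.mul_le_mul_iff_right hJ5 hJ5t]
  calc J ^ ((5:ℝ)/9) * J ^ ((4:ℝ)/9) = J := by
        rw [← ENNReal.rpow_add_of_nonneg _ _ (by norm_num) (by norm_num)]; norm_num
    _ ≤ _ := hmain
    _ = _ := by ring

/-- The retarded estimate with the supremum in space. -/
lemma retarded_sup (hm : Measurable fun p : ℝ × (ℝ × ℝ) => Φ p.1 p.2)
    (hi : ∀ τ, Integrable (Φ τ)) (hM : ∀ τ, ∫ ξ, ‖Φ τ ξ‖ ≤ M) {T : ℝ} (hT1 : T ≤ 1) :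
    L94LinfNorm T (duhF Φ) ≤ 2 * stricConst * ∫⁻ τ in Set.Icc (0:ℝ) T, wNorm (Φ τ) := by
  obtain ⟨x, hx, hmax⟩ := exists_near_max hm hi hM
  unfold L94LinfNorm
  calc _ ≤ (∫⁻ t in Set.Icc (0:ℝ) T, (2 * ‖duhF Φ t (x t)‖ₑ) ^ ((9:ℝ)/4)) ^ ((4:ℝ)/9) := by
        gcongr with t
        exact hmax t
    _ = 2 * (∫⁻ t in Set.Icc (0:ℝ) T, ‖duhF Φ t (x t)‖ₑ ^ ((9:ℝ)/4)) ^ ((4:ℝ)/9) := by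
        simp only [ENNReal.mul_rpow_of_nonneg _ _ (show (0:ℝ) ≤ 9/4 by norm_num)]
        rw [lintegral_const_mul' _ _ (ENNReal.rpow_ne_top_of_nonneg (by norm_num) (by norm_num)),
          ENNReal.mul_rpow_of_nonneg _ _ (by norm_num), ← ENNReal.rpow_mul]
        norm_num
    _ ≤ 2 * (stricConst * ∫⁻ τ in Set.Icc (0:ℝ) T, wNorm (Φ τ)) := by
        gcongr
        exact retarded_along hm hi hM hx hT1
    _ = _ := by ring

end

lemma U_eq_wave (g : ℝ → SchwartzMap (ℝ × ℝ) ℂ) (t τ : ℝ) (x : ℝ × ℝ) :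
    U (t - τ) (⇑(g τ)) x = wave (fun τ => ⇑(SF (g τ))) t τ x := by
  unfold U FTinv wave
  rw [FT_schwartz]
  refine integral_congr_ae (Filter.Eventually.of_forall fun ξ => ?_)
  simp only [osc, ph]
  rw [← mul_assoc, ← Complex.exp_add]
  congr 2
  push_cast
  ring

/-- The retarded estimate with right-hand side `∫ wNorm`, for sources given on `[0,T]` only. -/
lemma retarded_schwartz {T : ℝ} (hT0 : 0 ≤ T) (hT1 : T ≤ 1) (g : ℝ → SchwartzMap (ℝ × ℝ) ℂ)
    (hg : ContinuousOn g (Set.Icc 0 T)) :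
    L94LinfNorm T (Duh (fun τ => ⇑(g τ)))
      ≤ 2 * stricConst * ∫⁻ τ in Set.Icc (0:ℝ) T, wNorm (SF (g τ)) := by
  -- extend the source to all times by freezing it outside `[0,T]`
  set G : ℝ → SchwartzMap (ℝ × ℝ) ℂ := Set.IccExtend hT0 ((Set.Icc 0 T).domRestrict g) with hG
  have hGc : Continuous G := hg.domRestrict.Icc_extend'
  have hGg : ∀ τ ∈ Set.Icc (0:ℝ) T, G τ = g τ := fun τ hτ => by
    rw [hG, Set.IccExtend_of_mem hT0 _ hτ]; rfl
  set Φ : ℝ → ℝ × ℝ → ℂ := fun τ => ⇑(SF (G τ)) with hΦ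
  have hSc : Continuous fun τ => SF (G τ) := SF.continuous.comp hGc
  have hjoint : Continuous fun p : ℝ × (ℝ × ℝ) => Φ p.1 p.2 := by
    have h1 : Continuous fun p : ℝ × (ℝ × ℝ) =>
        (SchwartzMap.toBoundedContinuousFunctionCLM ℂ (ℝ × ℝ) ℂ (SF (G p.1))) :=
      (SchwartzMap.toBoundedContinuousFunctionCLM ℂ (ℝ × ℝ) ℂ).continuous.comp
        (hSc.comp continuous_fst)
    exact h1.eval continuous_snd
  have hi : ∀ τ, Integrable (Φ τ) := fun τ => (SF (G τ)).integrable
  obtain ⟨M, hM⟩ : ∃ M, ∀ τ, ∫ ξ, ‖Φ τ ξ‖ ≤ M := by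
    have hc : Continuous fun τ => ∫ ξ, ‖SF (G τ) ξ‖ := by
      have h : Continuous fun τ => ‖(SF (G τ)).toLp 1 (volume : Measure (ℝ × ℝ))‖ :=
        (SchwartzMap.continuous_toLp.comp hSc).norm
      simpa only [SchwartzMap.norm_toLp_one] using h
    obtain ⟨M, hM⟩ := (isCompact_Icc (a := (0:ℝ)) (b := T)).bddAbove_image hc.continuousOn
    refine ⟨M, fun τ => ?_⟩
    have hp : Φ τ = Φ (Set.projIcc 0 T hT0 τ) := by
      simp only [hΦ, hG, Set.IccExtend, Function.comp_apply, Set.projIcc_val]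
    rw [hp]
    exact hM ⟨_, (Set.projIcc 0 T hT0 τ).2, rfl⟩
  have hD : ∀ t ∈ Set.Icc (0:ℝ) T, Duh (fun τ => ⇑(g τ)) t = duhF Φ t := fun t ht => by
    funext x
    unfold Duh duhF
    rw [intervalIntegral.integral_of_le ht.1, ← integral_Icc_eq_integral_Ioc]
    have e : ∀ τ ∈ Set.Icc (0:ℝ) t, U (t - τ) (⇑(g τ)) x = wave Φ t τ x := fun τ hτ => by
      have := U_eq_wave G t τ x
      rwa [hGg τ ⟨hτ.1, hτ.2.trans ht.2⟩] at this
    rw [setIntegral_congr_fun measurableSet_Icc e]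
    unfold retWave
    rw [integral_indicator measurableSet_Iic, Measure.restrict_restrict measurableSet_Iic]
    congr 2
    ext s
    simp only [Set.mem_inter_iff, Set.mem_Iic, Set.mem_Icc]
    constructor
    · rintro ⟨h1, h2⟩; exact ⟨h2, h1, h2.trans (ht.2.trans hT1)⟩
    · rintro ⟨h1, h2, -⟩; exact ⟨h2, h1⟩
  calc _ = L94LinfNorm T (duhF Φ) := by
        unfold L94LinfNorm
        rw [setLIntegral_congr_fun measurableSet_Icc]
        intro t ht
        simp only [hD t ht]
    _ ≤ 2 * stricConst * ∫⁻ τ in Set.Icc (0:ℝ) T, wNorm (Φ τ) :=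
        retarded_sup hjoint.measurable hi hM hT1
    _ = _ := by
        congr 1
        refine setLIntegral_congr_fun measurableSet_Icc fun τ hτ => ?_
        simp only [hΦ, hGg τ hτ]

/-- retarded `L^{9/4}_T L^∞_x` estimates for the Duhamel term. -/
theorem stmt4 :
    ∃ C : ℝ, 0 < C ∧ ∀ T : ℝ, 0 ≤ T → T ≤ 1 →
      ∀ g : ℝ → SchwartzMap (ℝ × ℝ) ℂ, ContinuousOn g (Set.Icc 0 T) →
        L94LinfNorm T (Duh (fun τ => ⇑(g τ)))
          ≤ ENNReal.ofReal C * ∫⁻ τ in Set.Icc (0:ℝ) T, eLpNorm (⇑(g τ)) 2 volume ∧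
        L94LinfNorm T (Duh (fun τ => ⇑(g τ)))
          ≤ ENNReal.ofReal C *
              ∫⁻ τ in Set.Icc (0:ℝ) T, eLpNorm (Dx1 (-(2:ℝ)/9) ⇑(g τ)) 2 volume := by
  have hfin : 2 * stricConst ≠ ⊤ := ENNReal.mul_ne_top (by norm_num) stricConst_lt_top.ne
  refine ⟨(2 * stricConst).toReal + 1, by positivity, fun T hT0 hT1 g hg => ?_⟩
  have hC : 2 * stricConst ≤ ENNReal.ofReal ((2 * stricConst).toReal + 1) := by
    rw [← ENNReal.ofReal_toReal hfin]
    refine ENNReal.ofReal_le_ofReal ?_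
    rw [ENNReal.ofReal_toReal hfin]
    linarith
  have h := retarded_schwartz hT0 hT1 g hg
  constructor
  · refine h.trans ?_
    gcongr with τ
    exact wNorm_le_L2 _
  · refine h.trans ?_
    gcongr with τ
    exact wNorm_le_Dx1 _
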